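/- arXiv:2402.17795 — 5 statements merged into one kernel-verified Lean document; each statement's English description precedes it below -/
import Mathlib

section
/- Let a : ℝ → [0,1] with √a κ-Lipschitz, and H ∈ 𝓗(α0,α1,γ) with γ > 2. Let λ0 := inf{μ ∈ ℝ : the equation a(x)u'' + H(x,u') = μ admits a continuous viscosity supersolution on ℝ}, and let λ ≥ λ0. Then there exists a viscosity solution u of a(x)u'' + H(x,u') = λ on ℝ; moreover u is K-Lipschitz, where K = C((κ√(1+α1+|λ|)/α0)^{2/(γ−1)} + ((1+λα0)/α0²)^{1/γ}) with C depending only on γ, and u is of class C² on every open interval contained in {a > 0}. Furthermore λ0 ≥ inf H ≥ −1/α0. -/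
open Real Set Filter Topology MeasureTheory

noncomputable section

/-- The Hamiltonian class `𝓗(α₀, α₁, γ)`: growth condition (H1) and the local
Lipschitz conditions (H2), (H3). -/
def HamClass (a0 a1 g : ℝ) (H : ℝ → ℝ → ℝ) : Prop :=
  (∀ x p : ℝ, a0 * |p| ^ g - 1 / a0 ≤ H x p) ∧
  (∀ x p : ℝ, H x p ≤ a1 * (|p| ^ g + 1)) ∧
  (∀ x p q : ℝ, |H x p - H x q| ≤ a1 * (|p| + |q| + 1) ^ (g - 1) * |p - q|) ∧
  (∀ x y p : ℝ, |H x p - H y p| ≤ a1 * (|p| ^ g + 1) * |x - y|)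

/-- The strictly quasiconvex class `𝓗_sqc(α₀, α₁, γ, η)` with (unique) minimizer map
`phat`. -/
def HamSqc (a0 a1 g eta : ℝ) (H : ℝ → ℝ → ℝ) (phat : ℝ → ℝ) : Prop :=
  HamClass a0 a1 g H ∧
  (∀ x p : ℝ, H x (phat x) ≤ H x p) ∧
  (∀ x p : ℝ, (∀ q : ℝ, H x p ≤ H x q) → p = phat x) ∧
  (∀ x p1 p2 : ℝ, p1 < p2 → p2 ≤ phat x → eta * |p1 - p2| ≤ H x p1 - H x p2) ∧
  (∀ x p1 p2 : ℝ, phat x ≤ p1 → p1 < p2 → eta * |p1 - p2| ≤ H x p2 - H x p1)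

/-- A continuous `u` is a viscosity supersolution of `a(x) u'' + H(x, u') = lam` on `U`:
at every local minimum point `x0 ∈ U` of `u - φ`, with `φ` of class `C²`, one has
`a(x0) φ''(x0) + H(x0, φ'(x0)) ≤ lam`. -/
def ViscSuperOn (a : ℝ → ℝ) (H : ℝ → ℝ → ℝ) (lam : ℝ) (U : Set ℝ) (u : ℝ → ℝ) : Prop :=
  ∀ φ : ℝ → ℝ, ContDiff ℝ 2 φ → ∀ x0 ∈ U, IsLocalMin (fun x => u x - φ x) x0 →
    a x0 * deriv (deriv φ) x0 + H x0 (deriv φ x0) ≤ lam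

/-- Viscosity subsolution of `a(x) u'' + H(x, u') = lam` on `U`. -/
def ViscSubOn (a : ℝ → ℝ) (H : ℝ → ℝ → ℝ) (lam : ℝ) (U : Set ℝ) (u : ℝ → ℝ) : Prop :=
  ∀ φ : ℝ → ℝ, ContDiff ℝ 2 φ → ∀ x0 ∈ U, IsLocalMax (fun x => u x - φ x) x0 →
    lam ≤ a x0 * deriv (deriv φ) x0 + H x0 (deriv φ x0)

/-- Viscosity solution of `a(x) u'' + H(x, u') = lam` on `U`. -/
def ViscSolOn (a : ℝ → ℝ) (H : ℝ → ℝ → ℝ) (lam : ℝ) (U : Set ℝ) (u : ℝ → ℝ) : Prop :=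
  ViscSubOn a H lam U u ∧ ViscSuperOn a H lam U u

/-- The critical value `λ₀`: the infimum of the levels `lam` at which the stationary
equation `a u'' + H(x, u') = lam` admits a continuous viscosity supersolution on `ℝ`. -/
def CriticalValue (a : ℝ → ℝ) (H : ℝ → ℝ → ℝ) : ℝ :=
  sInf {lam : ℝ | ∃ u : ℝ → ℝ, Continuous u ∧ ViscSuperOn a H lam Set.univ u}

/-- Condition (A1'): `a ≢ 0` and every connected component of `A := {a > 0}` is bounded
(components of an open subset of `ℝ` are automatically open intervals). -/
def CondA1' (a : ℝ → ℝ) : Prop :=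
  (∃ x, a x ≠ 0) ∧
  ∀ x, 0 < a x → Bornology.IsBounded (connectedComponentIn {y : ℝ | 0 < a y} x)

theorem visc_local {a : ℝ → ℝ} {H : ℝ → ℝ → ℝ} {lam : ℝ} {u : ℝ → ℝ}
    (hu : ViscSuperOn a H lam univ u) {φ : ℝ → ℝ} {s : Set ℝ} (hs : IsOpen s)
    (hφ : ContDiffOn ℝ 2 φ s) {x0 : ℝ} (hx : x0 ∈ s)
    (hm : IsLocalMin (fun x => u x - φ x) x0) :
    a x0 * deriv (deriv φ) x0 + H x0 (deriv φ x0) ≤ lam := by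
  obtain ⟨e, he, hes⟩ := Metric.nhds_basis_closedBall.mem_iff.1 (hs.mem_nhds hx)
  let f : ContDiffBump x0 := ⟨e / 2, e, by positivity, by linarith⟩
  have heq : (fun x => f x * φ x) =ᶠ[𝓝 x0] φ := by
    filter_upwards [f.eventuallyEq_one] with x hx
    simp [hx]
  have hc : ContDiff ℝ 2 (fun x => f x * φ x) := by
    rw [contDiff_iff_contDiffAt]
    intro x
    by_cases hxs : x ∈ s
    · exact f.contDiffAt.mul (hφ.contDiffAt (hs.mem_nhds hxs))
    · have hxt : x ∉ tsupport f := by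
        rw [f.tsupport_eq]
        exact fun h => hxs (hes h)
      have h0 : (fun x => f x * φ x) =ᶠ[𝓝 x] fun _ => 0 := by
        filter_upwards [notMem_tsupport_iff_eventuallyEq.1 hxt] with y hy
        simp [hy]
      exact contDiffAt_const.congr_of_eventuallyEq h0
  have hm' : IsLocalMin (fun x => u x - f x * φ x) x0 := by
    refine hm.congr ?_
    filter_upwards [heq] with x hx
    rw [hx]
  have := hu _ hc x0 (mem_univ _) hm'
  rwa [heq.deriv_eq, heq.deriv.deriv_eq] at this

theorem lip_arith {α0 γ δ B s : ℝ} (hα : 0 < α0) (hγ : 2 < γ) (hδ0 : 0 < δ) (hB0 : 0 < B)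
    (hBd : 1 < B * δ) (hBa : 1 < B * α0) (hs0 : 0 < s)
    (hmain : δ + α0 * s ^ γ ≤ s ^ 2 / B) : False := by
  rw [le_div_iff₀ hB0] at hmain
  have hsγ : 0 < s ^ γ := Real.rpow_pos_of_pos hs0 γ
  rcases le_total s 1 with h | h
  · have h1 : s ^ 2 ≤ 1 := by nlinarith
    have : 0 < α0 * s ^ γ * B := by positivity
    linarith
  · have h2 : s ^ (2:ℝ) ≤ s ^ γ := Real.rpow_le_rpow_of_exponent_le h hγ.le
    rw [Real.rpow_two] at h2
    have : s ^ γ * 1 ≤ s ^ γ * (B * α0) := mul_le_mul_of_nonneg_left hBa.le hsγ.le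
    have : 0 < δ * B := by positivity
    linarith

theorem lip_upper {a : ℝ → ℝ} {H : ℝ → ℝ → ℝ} {mu α0 γ r : ℝ} {u : ℝ → ℝ}
    (ha : ∀ x, a x ∈ Icc (0:ℝ) 1) (hα : 0 < α0) (hγ : 2 < γ)
    (hH : ∀ x p : ℝ, α0 * |p| ^ γ - 1 / α0 ≤ H x p)
    (huc : Continuous u) (hu : ViscSuperOn a H mu univ u)
    (hr : 0 ≤ r) (hr2 : mu + 1 / α0 < α0 * r ^ γ) {x y : ℝ} (hxy : x < y) :
    u y - u x ≤ r * (y - x) := by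
  by_contra! hcon
  obtain ⟨δ, hδ⟩ : ∃ δ, δ = α0 * r ^ γ - mu - 1 / α0 := ⟨_, rfl⟩
  have hδ0 : 0 < δ := by linarith
  obtain ⟨B, hB⟩ : ∃ B, B = 1 / δ + 1 / α0 := ⟨_, rfl⟩
  have h1d : 0 < 1 / δ := by positivity
  have h1a : 0 < 1 / α0 := by positivity
  have hB0 : 0 < B := by linarith
  have hBd : 1 < B * δ := by
    have : B * δ = 1 + 1 / α0 * δ := by rw [hB]; field_simp
    have : 0 < 1 / α0 * δ := by positivity
    linarith
  have hBa : 1 < B * α0 := by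
    have : B * α0 = 1 + 1 / δ * α0 := by rw [hB]; field_simp; ring
    have : 0 < 1 / δ * α0 := by positivity
    linarith
  obtain ⟨g, hg⟩ : ∃ g, g = u y - u x - r * (y - x) := ⟨_, rfl⟩
  have hg0 : 0 < g := by linarith
  have hyx : 0 < y - x := by linarith
  obtain ⟨D, hD⟩ : ∃ D, D = B * (y - x) / g + 1 := ⟨_, rfl⟩
  have hD0 : 0 < D := by rw [hD]; positivity
  have hDg : B * ((y - x) / D) < g := by
    rw [mul_div_assoc', div_lt_iff₀ hD0, hD]
    have : g * (B * (y - x) / g + 1) = B * (y - x) + g := by field_simp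
    linarith
  obtain ⟨c, hc⟩ : ∃ c, c = x - D := ⟨_, rfl⟩
  have hcx : c < x := by linarith
  have hlog : Real.log (y - c) - Real.log (x - c) ≤ (y - x) / D := by
    rw [← Real.log_div (by linarith) (by linarith)]
    have h1 := Real.log_le_sub_one_of_pos (x := (y - c) / (x - c))
      (div_pos (by linarith) (by linarith))
    have h2 : (y - c) / (x - c) - 1 = (y - x) / D := by
      have : x - c = D := by linarith
      rw [this]; field_simp; linarith
    linarith
  set ψ : ℝ → ℝ := fun z => r * z + B * Real.log (z - c) with hψ
  have hyv : u x - ψ x < u y - ψ y := by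
    have : B * (Real.log (y - c) - Real.log (x - c)) ≤ B * ((y - x) / D) :=
      mul_le_mul_of_nonneg_left hlog hB0.le
    simp only [hψ]; linarith
  obtain ⟨m, hm⟩ : ∃ m, ∀ z ∈ Icc c y, m ≤ u z := by
    obtain ⟨m, hm⟩ := (isCompact_Icc (a := c) (b := y)).bddBelow_image huc.continuousOn
    exact ⟨m, fun z hz => hm (mem_image_of_mem u hz)⟩
  obtain ⟨T, hT⟩ : ∃ T, T = (u x - ψ x + r * y - m + 1) / B := ⟨_, rfl⟩
  have hBT : B * T = u x - ψ x + r * y - m + 1 := by rw [hT]; field_simp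
  obtain ⟨c', hc'⟩ : ∃ c', c' = c + Real.exp (-T) := ⟨_, rfl⟩
  have hcc : c < c' := by have := Real.exp_pos (-T); linarith
  have hleft : ∀ z, c < z → z ≤ c' → z ≤ y → u x - ψ x < u z - ψ z := by
    intro z h1 h2 h3
    have hl : Real.log (z - c) ≤ -T := by
      rw [Real.log_le_iff_le_exp (by linarith)]; linarith
    have h4 : B * Real.log (z - c) ≤ B * (-T) := mul_le_mul_of_nonneg_left hl hB0.le
    have h5 : r * z ≤ r * y := mul_le_mul_of_nonneg_left h3 hr
    have h6 := hm z ⟨h1.le, h3⟩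
    have : ψ z = r * z + B * Real.log (z - c) := rfl
    linarith
  have hc'x : c' < x := by
    by_contra! h
    exact lt_irrefl _ (hleft x hcx h hxy.le)
  have hψs : ContDiffOn ℝ 2 ψ (Ioi c) := by
    intro z hz
    have : z - c ≠ 0 := (sub_pos.2 hz).ne'
    apply ContDiffAt.contDiffWithinAt
    exact (contDiffAt_const.mul contDiffAt_id).add
      (contDiffAt_const.mul ((contDiffAt_id.sub contDiffAt_const).log this))
  have hcont : ContinuousOn (fun z => u z - ψ z) (Icc c' y) :=
    huc.continuousOn.sub (hψs.continuousOn.mono fun z hz => lt_of_lt_of_le hcc hz.1)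
  obtain ⟨z0, hz0, hmin⟩ := isCompact_Icc.exists_isMinOn ⟨x, hc'x.le, hxy.le⟩ hcont
  have hz0x : u z0 - ψ z0 ≤ u x - ψ x := hmin (show x ∈ Icc c' y from ⟨hc'x.le, hxy.le⟩)
  have hz1 : c' < z0 := by
    by_contra! h
    have := hleft z0 (lt_of_lt_of_le hcc hz0.1) h hz0.2
    linarith
  have hz2 : z0 < y := by
    refine lt_of_le_of_ne hz0.2 ?_
    rintro rfl
    linarith
  have hlm := hmin.isLocalMin (Icc_mem_nhds hz1 hz2)
  have hz0c : c < z0 := hcc.trans hz1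
  have key := visc_local hu isOpen_Ioi hψs hz0c hlm
  have hd1 : ∀ z, c < z → deriv ψ z = r + B * (z - c)⁻¹ := by
    intro z hz
    have h0 : z - c ≠ 0 := (sub_pos.2 hz).ne'
    have h1 : HasDerivAt (fun z => z - c) 1 z := (hasDerivAt_id z).sub_const c
    have h2 := ((hasDerivAt_id z).const_mul r).add ((h1.log h0).const_mul B)
    refine Eq.trans h2.deriv ?_
    simp
  have hd2 : deriv (deriv ψ) z0 = - (B * (z0 - c)⁻¹) ^ 2 / B := by
    have he : deriv ψ =ᶠ[𝓝 z0] fun z => r + B * (z - c)⁻¹ := by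
      filter_upwards [Ioi_mem_nhds hz0c] with z hz using hd1 z hz
    rw [he.deriv_eq]
    have h0 : z0 - c ≠ 0 := (sub_pos.2 hz0c).ne'
    have h1 : HasDerivAt (fun z => z - c) 1 z0 := (hasDerivAt_id z0).sub_const c
    have h2 := ((h1.inv h0).const_mul B).const_add r
    have h3 := h2.deriv
    refine Eq.trans h3 ?_
    field_simp
  rw [hd2, hd1 z0 hz0c] at key
  obtain ⟨s, hs⟩ : ∃ s, s = B * (z0 - c)⁻¹ := ⟨_, rfl⟩
  rw [← hs] at key
  have hs0 : 0 < s := by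
    rw [hs]; exact mul_pos hB0 (inv_pos.2 (sub_pos.2 hz0c))
  have hHs := hH z0 (r + s)
  rw [abs_of_nonneg (by positivity)] at hHs
  have hadd := Real.add_rpow_le_rpow_add hr hs0.le (by linarith : 1 ≤ γ)
  have hadd' := mul_le_mul_of_nonneg_left hadd hα.le
  have hsq : a z0 * (-s ^ 2 / B) ≥ - (s ^ 2 / B) := by
    have : a z0 * (s ^ 2 / B) ≤ 1 * (s ^ 2 / B) :=
      mul_le_mul_of_nonneg_right (ha z0).2 (by positivity)
    have h : a z0 * (-s ^ 2 / B) = - (a z0 * (s ^ 2 / B)) := by ring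
    linarith
  have hmain : δ + α0 * s ^ γ ≤ s ^ 2 / B := by linarith
  exact lip_arith hα hγ hδ0 hB0 hBd hBa hs0 hmain

theorem visc_reflect {a : ℝ → ℝ} {H : ℝ → ℝ → ℝ} {mu : ℝ} {u : ℝ → ℝ}
    (hu : ViscSuperOn a H mu univ u) :
    ViscSuperOn (fun x => a (-x)) (fun x p => H (-x) (-p)) mu univ (fun x => u (-x)) := by
  intro φ hφ x0 _ hm
  have h1 : ContDiff ℝ 2 (fun x => φ (-x)) := hφ.comp contDiff_neg
  have hm' : IsLocalMin (fun x => u x - φ (-x)) (-x0) := by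
    have hm2 : IsLocalMin (fun x => u (-x) - φ x) (- -x0) := by simpa using hm
    have := hm2.comp_continuous (g := fun x : ℝ => -x) (b := -x0) continuous_neg.continuousAt
    simpa [Function.comp_def] using this
  have key := hu _ h1 (-x0) (mem_univ _) hm'
  have hd : deriv (fun x => φ (-x)) = fun x => - deriv φ (-x) := by
    funext x; exact deriv_comp_neg φ x
  rw [hd] at key
  have hd2 : deriv (fun x => - deriv φ (-x)) (-x0) = deriv (deriv φ) x0 := by
    rw [deriv.fun_neg, deriv_comp_neg (deriv φ)]; simp
  rw [hd2] at key
  simpa using key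

theorem lip_of_super {a : ℝ → ℝ} {H : ℝ → ℝ → ℝ} {mu α0 γ r : ℝ} {u : ℝ → ℝ}
    (ha : ∀ x, a x ∈ Icc (0:ℝ) 1) (hα : 0 < α0) (hγ : 2 < γ)
    (hH : ∀ x p : ℝ, α0 * |p| ^ γ - 1 / α0 ≤ H x p)
    (huc : Continuous u) (hu : ViscSuperOn a H mu univ u)
    (hr : 0 ≤ r) (hr2 : mu + 1 / α0 < α0 * r ^ γ) (x y : ℝ) :
    |u x - u y| ≤ r * |x - y| := by
  have main : ∀ x y, x < y → |u x - u y| ≤ r * |x - y| := by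
    intro x y hxy
    have h1 := lip_upper ha hα hγ hH huc hu hr hr2 hxy
    have h2 := lip_upper (a := fun x => a (-x)) (H := fun x p => H (-x) (-p))
      (u := fun x => u (-x)) (mu := mu) (x := -y) (y := -x) (fun x => ha (-x)) hα hγ
      (fun x p => by simpa using hH (-x) (-p)) (huc.comp continuous_neg) (visc_reflect hu) hr hr2
      (by linarith)
    simp only [neg_neg] at h2
    rw [abs_of_neg (by linarith : x - y < 0), abs_le]
    constructor <;> nlinarith
  rcases lt_trichotomy x y with h | h | h
  · exact main x y h
  · simp [h]
  · rw [abs_sub_comm (u x), abs_sub_comm x]; exact main y x h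

theorem second_deriv_nonneg {f : ℝ → ℝ} {x : ℝ} (hm : IsLocalMin f x) (hc : ContinuousAt f x) :
    0 ≤ deriv (deriv f) x := by
  by_contra! h
  have hd := hm.deriv_eq_zero
  have hM := isLocalMax_of_deriv_deriv_neg h hd hc
  have he : f =ᶠ[𝓝 x] fun _ => f x := by
    filter_upwards [hm, hM] with y h1 h2
    exact le_antisymm h2 h1
  rw [he.deriv.deriv_eq] at h
  simp at h

theorem deriv2_facts {f : ℝ → ℝ} (hf : ContDiff ℝ 2 f) :
    (∀ x, HasDerivAt f (deriv f x) x) ∧ (∀ x, HasDerivAt (deriv f) (deriv (deriv f) x) x) ∧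
      Continuous (deriv f) ∧ Continuous (deriv (deriv f)) := by
  have h1 : ContDiff ℝ (1 + 1) f := by simpa [one_add_one_eq_two] using hf
  have h2 : ContDiff ℝ 1 (deriv f) := (contDiff_succ_iff_deriv.1 h1).2.2
  refine ⟨fun x => (hf.differentiable (by norm_num) x).hasDerivAt,
    fun x => (h2.differentiable (by norm_num) x).hasDerivAt, h2.continuous,
    h2.continuous_deriv (by norm_num)⟩

/-- comparison of a supersolution with a strict solution by doubling variables -/
theorem doubling {a : ℝ → ℝ} {H : ℝ → ℝ → ℝ} {mu K ε x1 x2 : ℝ} {v P : ℝ → ℝ}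
    (hv : ViscSuperOn a H mu univ v) (hK : 0 ≤ K) (hε : 0 < ε)
    (hL : ∀ x y, |v x - v y| ≤ K * |x - y|) (hP : ContDiff ℝ 2 P) (hx : x1 < x2)
    (h1 : K < deriv P x1) (h2 : deriv P x2 < -K) :
    ∃ x ∈ Ioo x1 x2, ∃ y, |x - y| ≤ 2 * K * ε ∧ deriv P x = (x - y) / ε ∧
      deriv (deriv P) x ≤ 1 / ε ∧
      ∀ t : ℝ, a y * (t ^ 2 * deriv (deriv P) x - (t - 1) ^ 2 / ε) + H y (deriv P x) ≤ mu := by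
  obtain ⟨hP1, hP2, -, -⟩ := deriv2_facts hP
  have hvc : Continuous v := by
    have : LipschitzWith K.toNNReal v := LipschitzWith.of_dist_le_mul fun x y => by
      rw [Real.dist_eq, Real.dist_eq, Real.coe_toNNReal _ hK]; exact hL x y
    exact this.continuous
  set Φ : ℝ × ℝ → ℝ := fun z => v z.2 - P z.1 + (z.1 - z.2) ^ 2 / (2 * ε) with hΦ
  have hΦc : Continuous Φ := by
    have := hP.continuous
    fun_prop
  have hR : 0 ≤ 2 * K * ε := by positivity
  set S : Set (ℝ × ℝ) := Icc x1 x2 ×ˢ Icc (x1 - 2 * K * ε - 1) (x2 + 2 * K * ε + 1) with hS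
  have hSc : IsCompact S := isCompact_Icc.prod isCompact_Icc
  obtain ⟨⟨x0, y0⟩, hz, hmin⟩ := hSc.exists_isMinOn
    ⟨(x1, x1), ⟨⟨le_rfl, hx.le⟩, ⟨by simp only; linarith, by simp only; linarith⟩⟩⟩ hΦc.continuousOn
  have hmin' : ∀ x y, x ∈ Icc x1 x2 → y ∈ Icc (x1 - 2 * K * ε - 1) (x2 + 2 * K * ε + 1) →
      v y0 - P x0 + (x0 - y0) ^ 2 / (2 * ε) ≤ v y - P x + (x - y) ^ 2 / (2 * ε) := by
    intro x y hx hy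
    exact hmin (show (x, y) ∈ S from ⟨hx, hy⟩)
  obtain ⟨hx0, hy0⟩ := hz
  simp only at hx0 hy0
  have hd : |x0 - y0| ≤ 2 * K * ε := by
    have h := hmin' x0 x0 hx0 ⟨by linarith [hx0.1], by linarith [hx0.2]⟩
    have h3 := (abs_le.1 (hL x0 y0)).2
    have h4 : (x0 - y0) ^ 2 / (2 * ε) ≤ K * |x0 - y0| := by
      simp only [sub_self] at h
      norm_num at h
      linarith
    rw [div_le_iff₀ (by positivity), ← sq_abs] at h4
    by_contra! hcon
    have hpos : 0 < |x0 - y0| := lt_of_le_of_lt hR hcon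
    nlinarith
  have hy1 : x1 - 2 * K * ε - 1 < y0 := by have := (abs_le.1 hd).2; linarith [hx0.1]
  have hy2 : y0 < x2 + 2 * K * ε + 1 := by have := (abs_le.1 hd).1; linarith [hx0.2]
  have trans : ∀ h : ℝ, x0 + h ∈ Icc x1 x2 → y0 + h ∈ Icc (x1 - 2 * K * ε - 1) (x2 + 2 * K * ε + 1) →
      P (x0 + h) - P x0 ≤ K * |h| := by
    intro h ha hb
    have h3 := hmin' _ _ ha hb
    have h4 := (abs_le.1 (hL (y0 + h) y0)).2
    have e1 : x0 + h - (y0 + h) = x0 - y0 := by ring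
    have e2 : y0 + h - y0 = h := by ring
    rw [e1] at h3
    rw [e2] at h4
    linarith
  have nhy : ∀ᶠ h in 𝓝 (0:ℝ), y0 + h ∈ Icc (x1 - 2 * K * ε - 1) (x2 + 2 * K * ε + 1) := by
    have : Tendsto (fun h : ℝ => y0 + h) (𝓝 0) (𝓝 y0) := by
      have := (continuous_const_add y0).tendsto 0
      simpa using this
    exact this (Icc_mem_nhds hy1 hy2)
  have hx01 : x1 < x0 := by
    refine lt_of_le_of_ne hx0.1 ?_
    intro he
    have hd1 := hasDerivAt_iff_tendsto_slope_zero.1 (hP1 x0)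
    have hd2 : Tendsto (fun t => t⁻¹ • (P (x0 + t) - P x0)) (𝓝[>] 0) (𝓝 (deriv P x0)) :=
      hd1.mono_left (nhdsWithin_mono _ fun t (ht : 0 < t) => ht.ne')
    have hev : ∀ᶠ t in 𝓝[>] (0:ℝ), t⁻¹ • (P (x0 + t) - P x0) ≤ K := by
      have n1 : ∀ᶠ t in 𝓝[>] (0:ℝ), t < x2 - x1 :=
        nhdsWithin_le_nhds (Iio_mem_nhds (by linarith))
      filter_upwards [self_mem_nhdsWithin, n1, nhdsWithin_le_nhds nhy] with t ht h3 h4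
      have ht' : 0 < t := ht
      have := trans t ⟨by linarith, by linarith⟩ h4
      rw [abs_of_pos ht'] at this
      rw [smul_eq_mul, inv_mul_le_iff₀ ht']
      linarith
    have := le_of_tendsto hd2 hev
    rw [← he] at this
    linarith
  have hx02 : x0 < x2 := by
    refine lt_of_le_of_ne hx0.2 ?_
    intro he
    have hd1 := hasDerivAt_iff_tendsto_slope_zero.1 (hP1 x0)
    have hd2 : Tendsto (fun t => t⁻¹ • (P (x0 + t) - P x0)) (𝓝[<] 0) (𝓝 (deriv P x0)) :=
      hd1.mono_left (nhdsWithin_mono _ fun t (ht : t < 0) => ht.ne)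
    have hev : ∀ᶠ t in 𝓝[<] (0:ℝ), -K ≤ t⁻¹ • (P (x0 + t) - P x0) := by
      have n1 : ∀ᶠ t in 𝓝[<] (0:ℝ), x1 - x2 < t :=
        nhdsWithin_le_nhds (Ioi_mem_nhds (by linarith))
      filter_upwards [self_mem_nhdsWithin, n1, nhdsWithin_le_nhds nhy] with t ht h3 h4
      have ht' : t < 0 := ht
      have := trans t ⟨by linarith, by linarith⟩ h4
      rw [abs_of_neg ht'] at this
      have h5 : t⁻¹ < 0 := inv_lt_zero.2 ht'
      have h6 := mul_le_mul_of_nonpos_left this h5.le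
      have h7 : t⁻¹ * (K * -t) = -K := by
        have := ht'.ne
        field_simp
      rw [smul_eq_mul]; linarith
    have := ge_of_tendsto hd2 hev
    rw [he] at this
    linarith
  -- minimality in `x`
  have hm1 : IsLocalMin (fun x => v y0 - P x + (x - y0) ^ 2 / (2 * ε)) x0 := by
    filter_upwards [Icc_mem_nhds hx01 hx02] with x hx
    exact hmin' x y0 hx hy0
  have hder : ∀ x, HasDerivAt (fun x => v y0 - P x + (x - y0) ^ 2 / (2 * ε))
      (- deriv P x + (x - y0) / ε) x := by
    intro x
    have h3 : HasDerivAt (fun x => (x - y0) ^ 2) (2 * (x - y0)) x := by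
      have := ((hasDerivAt_id x).sub_const y0).pow 2
      refine HasDerivAt.congr_deriv this ?_
      simp
    have h4 := ((hP1 x).const_sub (v y0)).add (h3.div_const (2 * ε))
    refine HasDerivAt.congr_deriv h4 ?_
    field_simp
  have hfo : deriv P x0 = (x0 - y0) / ε := by
    have h3 := hm1.hasDerivAt_eq_zero (hder x0)
    linarith
  have hso : deriv (deriv P) x0 ≤ 1 / ε := by
    have h3 := second_deriv_nonneg hm1 (hder x0).continuousAt
    have h4 : deriv (fun x => v y0 - P x + (x - y0) ^ 2 / (2 * ε)) =
      fun x => - deriv P x + (x - y0) / ε := funext fun x => (hder x).deriv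
    have h5 : HasDerivAt (fun x => - deriv P x + (x - y0) / ε) (-deriv (deriv P) x0 + 1 / ε) x0 :=
      (hP2 x0).neg.add (((hasDerivAt_id x0).sub_const y0).div_const ε)
    rw [h4, h5.deriv] at h3
    linarith
  refine ⟨x0, ⟨hx01, hx02⟩, y0, hd, hfo, hso, fun t => ?_⟩
  set ψ : ℝ → ℝ := fun y => P (x0 + t * (y - y0)) - (x0 + t * (y - y0) - y) ^ 2 / (2 * ε) with hψ
  have hψc : ContDiff ℝ 2 ψ := by
    apply ContDiff.sub
    · exact hP.comp (by fun_prop)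
    · fun_prop
  have hψm : IsLocalMin (fun y => v y - ψ y) y0 := by
    have ht : Tendsto (fun y : ℝ => x0 + t * (y - y0)) (𝓝 y0) (𝓝 x0) := by
      have : Continuous (fun y : ℝ => x0 + t * (y - y0)) := by fun_prop
      simpa using this.tendsto y0
    filter_upwards [ht (Icc_mem_nhds hx01 hx02), Icc_mem_nhds hy1 hy2] with y h3 h4
    have h5 := hmin' _ _ h3 h4
    simp only [hψ, sub_self, mul_zero, add_zero]
    linarith
  have key := hv ψ hψc y0 (mem_univ _) hψm
  have hinner : ∀ y, HasDerivAt (fun y => x0 + t * (y - y0)) t y := fun y => by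
    have := (((hasDerivAt_id y).sub_const y0).const_mul t).const_add x0
    simpa using this
  have hψd : ∀ y, HasDerivAt ψ (deriv P (x0 + t * (y - y0)) * t -
      (x0 + t * (y - y0) - y) * (t - 1) / ε) y := by
    intro y
    have h3 := (hP1 (x0 + t * (y - y0))).comp y (hinner y)
    have h4 := (((hinner y).sub (hasDerivAt_id y)).pow 2).div_const (2 * ε)
    have h5 := h3.sub h4
    refine HasDerivAt.congr_deriv h5 ?_
    simp; field_simp
  have hψe : deriv ψ = fun y => deriv P (x0 + t * (y - y0)) * t -
      (x0 + t * (y - y0) - y) * (t - 1) / ε := funext fun y => (hψd y).deriv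
  have hψ2 : deriv (deriv ψ) y0 = t ^ 2 * deriv (deriv P) x0 - (t - 1) ^ 2 / ε := by
    rw [hψe]
    have h3 := ((hP2 (x0 + t * (y0 - y0))).comp y0 (hinner y0)).mul_const t
    have h4 := (((hinner y0).sub (hasDerivAt_id y0)).mul_const (t - 1)).div_const ε
    have h5 := (h3.sub h4).deriv
    refine Eq.trans h5 ?_
    simp; ring
  have hψ1 : deriv ψ y0 = deriv P x0 := by
    rw [hψe]
    simp only [sub_self, mul_zero, add_zero]
    rw [hfo]; ring
  rw [hψ2, hψ1] at key
  exact key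

theorem ode_exists {g : ℝ → ℝ → ℝ} (hg : Continuous (fun z : ℝ × ℝ => g z.1 z.2)) {L M : ℝ}
    (hL : 0 ≤ L) (hM : 0 ≤ M)
    (hb : ∀ x p, |g x p| ≤ L) (hlip : ∀ x p q, |g x p - g x q| ≤ M * |p - q|) {T : ℝ} (hT : 0 < T)
    (p0 : ℝ) :
    ∃ P : ℝ → ℝ, ContDiff ℝ 2 P ∧ P 0 = 0 ∧ deriv P (-T) = p0 ∧
      ∀ x ∈ Icc (-T) T, deriv (deriv P) x = g x (deriv P x) := by
  have hTT : -T ≤ T := by linarith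
  have hpl : IsPicardLindelof g (tmin := -T) (tmax := T) ⟨-T, le_rfl, hTT⟩ p0
      (L * (2 * T)).toNNReal 0 L.toNNReal M.toNNReal := by
    refine ⟨?_, ?_, ?_, ?_⟩
    · intro t _
      apply LipschitzWith.lipschitzOnWith
      refine LipschitzWith.of_dist_le_mul fun p q => ?_
      rw [Real.dist_eq, Real.dist_eq, Real.coe_toNNReal _ hM]
      exact hlip t p q
    · intro p _
      exact (hg.comp (by fun_prop : Continuous fun t : ℝ => (t, p))).continuousOn
    · intro t _ p _
      rw [Real.norm_eq_abs, Real.coe_toNNReal _ hL]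
      exact hb t p
    · rw [Real.coe_toNNReal _ hL, Real.coe_toNNReal _ (by positivity)]
      simp only [NNReal.coe_zero, sub_zero]
      apply mul_le_mul_of_nonneg_left _ hL
      apply max_le <;> linarith
  obtain ⟨α, hα0, hα⟩ := hpl.exists_eq_forall_mem_Icc_hasDerivWithinAt₀
  simp only at hα0
  have hαc : ContinuousOn α (Icc (-T) T) := fun t ht => (hα t ht).continuousWithinAt
  set αe : ℝ → ℝ := IccExtend hTT ((Icc (-T) T).domRestrict α) with hαe
  have hαec : Continuous αe := (continuousOn_iff_continuous_domRestrict.1 hαc).Icc_extend'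
  have hαeq : ∀ t ∈ Icc (-T) T, αe t = α t := fun t ht => by
    rw [hαe, IccExtend_of_mem _ _ ht]; rfl
  have hGc : Continuous (fun x => g x (αe x)) :=
    hg.comp (by fun_prop : Continuous fun x => (x, αe x))
  set q : ℝ → ℝ := fun x => p0 + ∫ s in (-T)..x, g s (αe s) with hq
  have hqd : ∀ x, HasDerivAt q (g x (αe x)) x := fun x =>
    ((hGc.integral_hasStrictDerivAt (-T) x).hasDerivAt).const_add p0
  have hqc : Continuous q := continuous_iff_continuousAt.2 fun x => (hqd x).continuousAt
  have hqα : ∀ t ∈ Icc (-T) T, q t = α t := by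
    refine eq_of_has_deriv_right_eq (f' := fun x => g x (αe x))
      (fun x _ => (hqd x).hasDerivWithinAt) ?_ hqc.continuousOn hαc (by simp [hq, hα0])
    intro x hx
    rw [hαeq x ⟨hx.1, hx.2.le⟩]
    exact (hα x ⟨hx.1, hx.2.le⟩).mono_of_mem_nhdsWithin (Icc_mem_nhdsGE_of_mem hx)
  set P : ℝ → ℝ := fun x => ∫ s in (0:ℝ)..x, q s with hPdef
  have hPd : ∀ x, HasDerivAt P (q x) x := fun x => (hqc.integral_hasStrictDerivAt 0 x).hasDerivAt
  have hPe : deriv P = q := funext fun x => (hPd x).deriv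
  have hqe : deriv q = fun x => g x (αe x) := funext fun x => (hqd x).deriv
  refine ⟨P, ?_, by simp [hPdef], by rw [hPe]; simp [hq], ?_⟩
  · have h2 : ContDiff ℝ (1 + 1) P := by
      rw [contDiff_succ_iff_deriv]
      refine ⟨fun x => (hPd x).differentiableAt, by simp, ?_⟩
      rw [hPe, contDiff_one_iff_deriv]
      refine ⟨fun x => (hqd x).differentiableAt, ?_⟩
      rw [hqe]; exact hGc
    simpa [one_add_one_eq_two] using h2
  · intro x hx
    rw [hPe, hqe, hqα x hx, ← hαeq x hx]

theorem hasDerivAt_limit {ι : Type*} {l : Filter ι} [l.NeBot] {f : ι → ℝ → ℝ} {F : ℝ → ℝ}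
    {g : ι → ℝ → ℝ} {G x : ℝ} (hF : ∀ y, Tendsto (fun n => f n y) l (𝓝 (F y)))
    (h : ∀ e > 0, ∃ ρ > 0, ∀ᶠ n in l, ∀ y ∈ Metric.ball x ρ,
      HasDerivAt (f n) (g n y) y ∧ |g n y - G| ≤ e) : HasDerivAt F G x := by
  rw [hasDerivAt_iff_isLittleO, Asymptotics.isLittleO_iff]
  intro e he
  obtain ⟨ρ, hρ, hev⟩ := h e he
  filter_upwards [Metric.ball_mem_nhds x hρ] with y hy
  have hlim : Tendsto (fun n => ‖(f n y - y * G) - (f n x - x * G)‖) l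
      (𝓝 ‖(F y - y * G) - (F x - x * G)‖) :=
    (((hF y).sub_const _).sub ((hF x).sub_const _)).norm
  have hle : ∀ᶠ n in l, ‖(f n y - y * G) - (f n x - x * G)‖ ≤ e * ‖y - x‖ := by
    filter_upwards [hev] with n hn
    refine Convex.norm_image_sub_le_of_norm_hasDerivWithin_le (f := fun y => f n y - y * G)
      (f' := fun y => g n y - 1 * G) (s := Metric.ball x ρ)
      (fun z hz => ?_) (fun z hz => ?_) (convex_ball x ρ) (Metric.mem_ball_self hρ) hy
    · exact ((hn z hz).1.sub ((hasDerivAt_id z).mul_const G)).hasDerivWithinAt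
    · rw [one_mul]; exact (hn z hz).2
  have := le_of_tendsto hlim hle
  have e1 : F y - F x - (y - x) • G = (F y - y * G) - (F x - x * G) := by
    rw [smul_eq_mul]; ring
  rw [e1]; exact this

theorem stab {ι : Type*} {l : Filter ι} [l.NeBot] {a : ℝ → ℝ} {H : ℝ → ℝ → ℝ} {lam : ℝ}
    (hac : Continuous a) (hH : Continuous (fun z : ℝ × ℝ => H z.1 z.2))
    {P : ι → ℝ → ℝ} {u : ℝ → ℝ} {θ L T : ι → ℝ} (hP : ∀ n, ContDiff ℝ 2 (P n))
    (hθ : Tendsto θ l (𝓝 0)) (hθ0 : ∀ n, 0 ≤ θ n) (ha0 : ∀ x, 0 ≤ a x)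
    (hL : Tendsto L l (𝓝 lam)) (hT : Tendsto T l atTop)
    (hu : ∀ y, Tendsto (fun n => P n y) l (𝓝 (u y)))
    (heq : ∀ n, ∀ x ∈ Icc (-T n) (T n),
      (a x + θ n) * deriv (deriv (P n)) x + H x (deriv (P n) x) ≤ L n)
    (φ : ℝ → ℝ) (hφ : ContDiff ℝ 2 φ) (x0 : ℝ) (hm : IsLocalMin (fun x => u x - φ x) x0) :
    a x0 * deriv (deriv φ) x0 + H x0 (deriv φ x0) ≤ lam := by
  by_contra! hcon
  set ψ : ℝ → ℝ := fun x => φ x - (x - x0) ^ 4 with hψ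
  have hψc : ContDiff ℝ 2 ψ := hφ.sub (by fun_prop)
  obtain ⟨hφ1, hφ2, -, -⟩ := deriv2_facts hφ
  obtain ⟨hψ1, hψ2, hψc1, hψc2⟩ := deriv2_facts hψc
  have e1 : deriv ψ = fun x => deriv φ x - 4 * (x - x0) ^ 3 := by
    funext x
    have h3 := (hφ1 x).sub (((hasDerivAt_id x).sub_const x0).pow 4)
    refine Eq.trans h3.deriv ?_
    simp
  have e2 : deriv (deriv ψ) x0 = deriv (deriv φ) x0 := by
    rw [e1]
    have h3 := (hφ2 x0).sub ((((hasDerivAt_id x0).sub_const x0).pow 3).const_mul 4)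
    refine Eq.trans h3.deriv ?_
    simp
  have e3 : deriv ψ x0 = deriv φ x0 := by rw [e1]; simp
  rw [← e2, ← e3] at hcon
  -- continuity
  have hcont : Continuous (fun z : ℝ × ℝ × ℝ =>
      (a z.1 + z.2.1) * deriv (deriv ψ) z.1 + H z.1 (deriv ψ z.1) - z.2.2) := by
    have h1 : Continuous (fun z : ℝ × ℝ × ℝ => H z.1 (deriv ψ z.1)) :=
      hH.comp (by fun_prop : Continuous fun z : ℝ × ℝ × ℝ => (z.1, deriv ψ z.1))
    fun_prop
  have hpos : ∀ᶠ z : ℝ × ℝ × ℝ in 𝓝 (x0, 0, lam),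
      0 < (a z.1 + z.2.1) * deriv (deriv ψ) z.1 + H z.1 (deriv ψ z.1) - z.2.2 := by
    apply hcont.continuousAt.eventually (lt_mem_nhds _)
    simp only [add_zero]; linarith
  rw [nhds_prod_eq, eventually_prod_iff] at hpos
  obtain ⟨p1, hp1, p2, hp2, hp⟩ := hpos
  have hp2' : ∀ᶠ n in l, p2 (θ n, L n) := (hθ.prodMk_nhds hL).eventually hp2
  obtain ⟨r, hr, hball⟩ := Metric.nhds_basis_closedBall.mem_iff.1 (hm.and hp1)
  have hb : ∀ x ∈ Icc (x0 - r) (x0 + r), u x0 - φ x0 ≤ u x - φ x ∧ p1 x := by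
    intro x hx
    apply hball
    rwa [Real.closedBall_eq_Icc]
  have hr4 : 0 < r ^ 4 := by positivity
  have cv : ∀ y, ∀ᶠ n in l, |P n y - u y| < r ^ 4 / 4 := fun y => by
    have := (hu y).eventually (Metric.ball_mem_nhds (u y) (by positivity : 0 < r ^ 4 / 4))
    filter_upwards [this] with n hn
    rwa [← Real.dist_eq]
  have hTl := hT.eventually_ge_atTop (|x0| + r)
  obtain ⟨n, hn2, c0, c1, c2, hTn⟩ :=
    (hp2'.and ((cv x0).and ((cv (x0 - r)).and ((cv (x0 + r)).and hTl)))).exists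
  obtain ⟨hP1, hP2, -, -⟩ := deriv2_facts (hP n)
  rw [abs_lt] at c0 c1 c2
  have hc : ContinuousOn (fun x => P n x - ψ x) (Icc (x0 - r) (x0 + r)) :=
    ((hP n).continuous.sub hψc.continuous).continuousOn
  obtain ⟨z, hz, hmin⟩ := isCompact_Icc.exists_isMinOn ⟨x0, by linarith, by linarith⟩ hc
  have hz0 : P n z - ψ z ≤ P n x0 - ψ x0 :=
    hmin (show x0 ∈ Icc (x0 - r) (x0 + r) from ⟨by linarith, by linarith⟩)
  have hψ0 : ψ x0 = φ x0 := by simp [hψ]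
  have hz1 : x0 - r < z := by
    refine lt_of_le_of_ne hz.1 ?_
    rintro rfl
    have h1 := (hb (x0 - r) hz).1
    have h2 : ψ (x0 - r) = φ (x0 - r) - r ^ 4 := by simp only [hψ]; ring
    linarith
  have hz2 : z < x0 + r := by
    refine lt_of_le_of_ne hz.2 ?_
    rintro rfl
    have h1 := (hb (x0 + r) hz).1
    have h2 : ψ (x0 + r) = φ (x0 + r) - r ^ 4 := by simp only [hψ]; ring
    linarith
  have hlm := hmin.isLocalMin (Icc_mem_nhds hz1 hz2)
  have hd : ∀ x, HasDerivAt (fun x => P n x - ψ x) (deriv (P n) x - deriv ψ x) x :=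
    fun x => (hP1 x).sub (hψ1 x)
  have hfo := hlm.hasDerivAt_eq_zero (hd z)
  have hso := second_deriv_nonneg hlm (hd z).continuousAt
  have hde : deriv (fun x => P n x - ψ x) = fun x => deriv (P n) x - deriv ψ x :=
    funext fun x => (hd x).deriv
  have hdd : HasDerivAt (fun x => deriv (P n) x - deriv ψ x)
    (deriv (deriv (P n)) z - deriv (deriv ψ) z) z := (hP2 z).sub (hψ2 z)
  rw [hde, hdd.deriv] at hso
  have hzT : z ∈ Icc (-T n) (T n) := by
    have := abs_le.1 (le_refl |x0|)
    constructor <;> linarith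
  have h1 := heq n z hzT
  have h2 := hp (hb z hz).2 hn2
  simp only at h2
  have h3 : deriv (P n) z = deriv ψ z := by linarith
  rw [h3] at h1
  have h4 : (a z + θ n) * deriv (deriv ψ) z ≤ (a z + θ n) * deriv (deriv (P n)) z :=
    mul_le_mul_of_nonneg_left (by linarith) (by linarith [ha0 z, hθ0 n])
  linarith


theorem H_cont {a0 a1 g : ℝ} {H : ℝ → ℝ → ℝ} (hg : 2 < g) (h : HamClass a0 a1 g H) :
    Continuous (fun z : ℝ × ℝ => H z.1 z.2) := by
  obtain ⟨-, -, h2, h3⟩ := h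
  rw [continuous_iff_continuousAt]
  rintro ⟨x0, p0⟩
  have hB : Continuous (fun z : ℝ × ℝ => a1 * (|z.2| + |p0| + 1) ^ (g - 1) * |z.2 - p0| +
      a1 * (|p0| ^ g + 1) * |z.1 - x0|) := by
    have : Continuous (fun z : ℝ × ℝ => (|z.2| + |p0| + 1) ^ (g - 1)) :=
      Continuous.rpow_const (by fun_prop) (fun z => Or.inr (by linarith))
    fun_prop
  have hB0 := hB.tendsto (x0, p0)
  simp only [sub_self, abs_zero, mul_zero, add_zero] at hB0
  rw [ContinuousAt, tendsto_iff_norm_sub_tendsto_zero]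
  refine squeeze_zero (fun _ => norm_nonneg _) (fun z => ?_) hB0
  have e : H z.1 z.2 - H x0 p0 = (H z.1 z.2 - H z.1 p0) + (H z.1 p0 - H x0 p0) := by ring
  simp only
  rw [Real.norm_eq_abs, e]
  exact (abs_add_le _ _).trans (add_le_add (h2 _ _ _) (h3 _ _ _))

theorem a_cont {a : ℝ → ℝ} {κ : ℝ} (ha : ∀ x, a x ∈ Icc (0:ℝ) 1) (hκ : 0 < κ)
    (h : ∀ x y : ℝ, |Real.sqrt (a x) - Real.sqrt (a y)| ≤ κ * |x - y|) : Continuous a := by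
  have h1 : LipschitzWith κ.toNNReal (fun x => Real.sqrt (a x)) :=
    LipschitzWith.of_dist_le_mul fun x y => by
      rw [Real.dist_eq, Real.dist_eq, Real.coe_toNNReal _ hκ.le]; exact h x y
  have h2 : a = fun x => Real.sqrt (a x) ^ 2 := funext fun x => (Real.sq_sqrt (ha x).1).symm
  rw [h2]
  exact h1.continuous.pow 2

theorem H_bd {a0 a1 g R : ℝ} {H : ℝ → ℝ → ℝ} (hg : 2 < g) (h0 : 0 < a0) (h1 : 0 < a1)
    (h : HamClass a0 a1 g H) (x p : ℝ) (hp : |p| ≤ R) :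
    |H x p| ≤ 1 / a0 + a1 * (R ^ g + 1) := by
  obtain ⟨hl, hu, -, -⟩ := h
  have hR : 0 ≤ R := (abs_nonneg p).trans hp
  have e1 : |p| ^ g ≤ R ^ g := Real.rpow_le_rpow (abs_nonneg p) hp (by linarith)
  have e2 : 0 ≤ |p| ^ g := Real.rpow_nonneg (abs_nonneg p) g
  have e3 : 0 ≤ R ^ g := Real.rpow_nonneg hR g
  have e4 : 0 < 1 / a0 := by positivity
  have e5 : 0 ≤ a0 * |p| ^ g := by positivity
  have e6 : 0 ≤ a1 * (R ^ g + 1) := by positivity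
  have e7 : a1 * (|p| ^ g + 1) ≤ a1 * (R ^ g + 1) :=
    mul_le_mul_of_nonneg_left (by linarith) h1.le
  rw [abs_le]
  constructor
  · linarith [hl x p]
  · linarith [hu x p]

/-- A supersolution forces solutions of the (strict) regularised ODE to stay bounded below. -/
theorem no_cross {a : ℝ → ℝ} {H : ℝ → ℝ → ℝ} {κ α0 α1 γ mu K ε L x1 x2 : ℝ} {v P : ℝ → ℝ}
    (ha : ∀ x, a x ∈ Icc (0:ℝ) 1) (hκ : 0 < κ)
    (hσ : ∀ x y : ℝ, |Real.sqrt (a x) - Real.sqrt (a y)| ≤ κ * |x - y|)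
    (h1 : 0 < α1) (hγ : 2 < γ) (hH : HamClass α0 α1 γ H)
    (hv : ViscSuperOn a H mu univ v) (hK : 0 ≤ K) (hε : 0 < ε)
    (hL : ∀ x y, |v x - v y| ≤ K * |x - y|) (hP : ContDiff ℝ 2 P) (hx : x1 < x2)
    (hx1 : K < deriv P x1) (hx2 : deriv P x2 < -K)
    (heq : ∀ x ∈ Ioo x1 x2, |deriv P x| ≤ 2 * K →
      (a x + ε ^ 2) * deriv (deriv P) x + H x (deriv P x) = L)
    (herr : mu + ((1 + 2 * K * κ) ^ 2 + α1 * ((2 * K) ^ γ + 1) * (2 * K)) * ε < L) : False := by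
  obtain ⟨x, hxI, y, hd, hfo, hso, key⟩ := doubling hv hK hε hL hP hx hx1 hx2
  have hp : |deriv P x| ≤ 2 * K := by
    rw [hfo, abs_div, abs_of_pos hε, div_le_iff₀ hε]; exact hd
  have he := heq x hxI hp
  obtain ⟨X, hX⟩ : ∃ X, X = deriv (deriv P) x := ⟨_, rfl⟩
  obtain ⟨p, hpd⟩ : ∃ p, p = deriv P x := ⟨_, rfl⟩
  rw [← hX] at he hso
  simp only [← hX, ← hpd] at key
  rw [← hpd] at he hp
  -- H comparison
  have hHc : H x p - H y p ≤ α1 * ((2 * K) ^ γ + 1) * (2 * K * ε) := by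
    have h3 := (le_abs_self _).trans (hH.2.2.2 x y p)
    have h4 : |p| ^ γ ≤ (2 * K) ^ γ := Real.rpow_le_rpow (abs_nonneg p) hp (by linarith)
    have h5 : 0 ≤ (2 * K) ^ γ := Real.rpow_nonneg (by linarith) γ
    refine h3.trans (mul_le_mul ?_ hd (abs_nonneg _) (by positivity))
    exact mul_le_mul_of_nonneg_left (by linarith) h1.le
  obtain ⟨s, hs⟩ : ∃ s, s = Real.sqrt (a x + ε ^ 2) := ⟨_, rfl⟩
  obtain ⟨σ, hσd⟩ : ∃ σ, σ = Real.sqrt (a y) := ⟨_, rfl⟩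
  have hax := (ha x).1
  have hay := (ha y).1
  have hs2 : s ^ 2 = a x + ε ^ 2 := by rw [hs, Real.sq_sqrt (by positivity)]
  have hσ2 : σ ^ 2 = a y := by rw [hσd, Real.sq_sqrt hay]
  have hs0 : 0 ≤ s := by rw [hs]; exact Real.sqrt_nonneg _
  have hσ0 : 0 ≤ σ := by rw [hσd]; exact Real.sqrt_nonneg _
  have hsx : |s - Real.sqrt (a x)| ≤ ε := by
    have q0 := Real.sqrt_nonneg (a x)
    have q1 : Real.sqrt (a x) ≤ s := by rw [hs]; exact Real.sqrt_le_sqrt (by nlinarith)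
    have q2 : Real.sqrt (a x) ^ 2 = a x := Real.sq_sqrt hax
    have q3 : s ≤ Real.sqrt (a x) + ε := by
      apply (sq_le_sq₀ hs0 (by positivity)).1
      nlinarith [mul_nonneg q0 hε.le]
    rw [abs_le]; constructor <;> linarith
  have hdiff : |s - σ| ≤ (1 + 2 * K * κ) * ε := by
    have h3 := hσ x y
    rw [← hσd] at h3
    have h4 : κ * |x - y| ≤ κ * (2 * K * ε) := mul_le_mul_of_nonneg_left hd hκ.le
    have h5 := abs_sub_le s (Real.sqrt (a x)) σ
    nlinarith
  have hdiff2 : (s - σ) ^ 2 / ε ≤ (1 + 2 * K * κ) ^ 2 * ε := by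
    rw [div_le_iff₀ hε, ← sq_abs]
    calc |s - σ| ^ 2 ≤ ((1 + 2 * K * κ) * ε) ^ 2 := pow_le_pow_left₀ (abs_nonneg _) hdiff 2
      _ = _ := by ring
  have hfin : s ^ 2 * X + H y p ≤ mu + (s - σ) ^ 2 / ε := by
    rcases hσ0.eq_or_lt with h0 | h0
    · have h3 := key 0
      have : a y = 0 := by rw [← hσ2, ← h0]; ring
      rw [this] at h3
      have h4 : s ^ 2 * X ≤ s ^ 2 * (1 / ε) := mul_le_mul_of_nonneg_left hso (by positivity)
      have h5 : (s - σ) ^ 2 / ε = s ^ 2 * (1 / ε) := by rw [← h0]; ring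
      linarith
    · have h3 := key (s / σ)
      have h4 : a y * ((s / σ) ^ 2 * X - (s / σ - 1) ^ 2 / ε) = s ^ 2 * X - (s - σ) ^ 2 / ε := by
        rw [← hσ2]; field_simp
      rw [h4] at h3
      linarith
  rw [hs2] at hfin
  nlinarith

theorem approx {a : ℝ → ℝ} {H : ℝ → ℝ → ℝ} {κ α0 α1 γ lam mu K η T : ℝ} {v : ℝ → ℝ}
    (ha : ∀ x, a x ∈ Icc (0:ℝ) 1) (hκ : 0 < κ)
    (hσ : ∀ x y : ℝ, |Real.sqrt (a x) - Real.sqrt (a y)| ≤ κ * |x - y|)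
    (h0 : 0 < α0) (h1 : 0 < α1) (hγ : 2 < γ) (hH : HamClass α0 α1 γ H)
    (hv : ViscSuperOn a H mu univ v) (hvc : Continuous v) (hK : 0 ≤ K)
    (hKγ : lam + 2 + 1 / α0 < α0 * K ^ γ)
    (hη : 0 < η) (hη1 : η < 1) (hmu : mu ≤ lam + η) (hT : 0 < T) :
    ∃ (P : ℝ → ℝ) (θ : ℝ), ContDiff ℝ 2 P ∧ P 0 = 0 ∧ 0 < θ ∧ θ ≤ η ∧
      ∀ x ∈ Icc (-T) T, |deriv P x| ≤ 2 * K + 1 ∧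
        (a x + θ) * deriv (deriv P) x + H x (deriv P x) = lam + 2 * η := by
  have hLv : ∀ x y, |v x - v y| ≤ K * |x - y| :=
    lip_of_super ha h0 hγ hH.1 hvc hv hK (by linarith)
  obtain ⟨E, hE⟩ : ∃ E, E = (1 + 2 * K * κ) ^ 2 + α1 * ((2 * K) ^ γ + 1) * (2 * K) := ⟨_, rfl⟩
  have hE1 : 1 ≤ E := by
    have e1 : 0 ≤ (2 * K) ^ γ := Real.rpow_nonneg (by linarith) γ
    have e2 : 0 ≤ α1 * ((2 * K) ^ γ + 1) * (2 * K) := by positivity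
    have e3 : 0 ≤ 2 * K * κ := by positivity
    nlinarith
  obtain ⟨ε, hεd⟩ : ∃ ε, ε = η / (2 * E) := ⟨_, rfl⟩
  have hε : 0 < ε := by rw [hεd]; positivity
  have hEε : E * ε = η / 2 := by rw [hεd]; field_simp
  have hεη : ε ≤ η / 2 := by nlinarith
  have hθη : ε ^ 2 ≤ η := by nlinarith
  obtain ⟨R, hR⟩ : ∃ R, R = 2 * K + 1 := ⟨_, rfl⟩
  have hR0 : 0 < R := by linarith
  obtain ⟨L, hL⟩ : ∃ L, L = lam + 2 * η := ⟨_, rfl⟩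
  have hac := a_cont ha hκ hσ
  have hHc := H_cont hγ hH
  set c : ℝ → ℝ := fun p => max (-R) (min R p) with hc
  have hcc : Continuous c := by fun_prop
  have hcR : ∀ p, |c p| ≤ R := fun p => by
    rw [abs_le]
    exact ⟨le_max_left _ _, max_le (by linarith) (min_le_left _ _)⟩
  have hcid : ∀ p, |p| ≤ R → c p = p := fun p hp => by
    rw [abs_le] at hp
    simp only [hc]
    rw [min_eq_right hp.2, max_eq_right hp.1]
  have hcl : ∀ p q, |c p - c q| ≤ |p - q| := fun p q => by
    have : LipschitzWith 1 c := (LipschitzWith.id.const_min R).const_max (-R)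
    simpa [Real.dist_eq] using this.dist_le_mul p q
  have hpos : ∀ x, ε ^ 2 ≤ a x + ε ^ 2 := fun x => by linarith [(ha x).1]
  have hε2 : 0 < ε ^ 2 := by positivity
  have hpos' : ∀ x, 0 < a x + ε ^ 2 := fun x => lt_of_lt_of_le hε2 (hpos x)
  obtain ⟨P, hP, hP0, hPT, hPe⟩ := ode_exists
    (g := fun x p => (L - H x (c p)) / (a x + ε ^ 2))
    (L := (|L| + (1 / α0 + α1 * (R ^ γ + 1))) / ε ^ 2)
    (M := α1 * (2 * R + 1) ^ (γ - 1) / ε ^ 2) (T := T)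
    (by
      apply Continuous.div
      · exact continuous_const.sub
          (hHc.comp (by fun_prop : Continuous fun z : ℝ × ℝ => (z.1, c z.2)))
      · fun_prop
      · intro z; exact (hpos' _).ne')
    (by positivity) (by positivity)
    (by
      intro x p
      rw [abs_div, abs_of_pos (hpos' x)]
      apply div_le_div₀ (by positivity) _ hε2 (hpos x)
      exact (abs_sub _ _).trans (add_le_add le_rfl (H_bd hγ h0 h1 hH x _ (hcR p))))
    (by
      intro x p q
      rw [div_sub_div_same, abs_div, abs_of_pos (hpos' x), div_mul_eq_mul_div]
      apply div_le_div₀ (by positivity) _ hε2 (hpos x)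
      have e1 : L - H x (c p) - (L - H x (c q)) = H x (c q) - H x (c p) := by ring
      rw [e1]
      refine (hH.2.2.1 x (c q) (c p)).trans ?_
      apply mul_le_mul _ _ (abs_nonneg _) (by positivity)
      · apply mul_le_mul_of_nonneg_left _ h1.le
        apply Real.rpow_le_rpow (by positivity) _ (by linarith)
        linarith [hcR p, hcR q]
      · rw [abs_sub_comm]; exact hcl p q)
    hT R
  obtain ⟨hP1, hP2, hPc1, hPc2⟩ := deriv2_facts hP
  have hup : ∀ x ∈ Icc (-T) T, deriv P x ≤ R := by
    intro x hx
    refine image_le_of_deriv_right_lt_deriv_boundary (f := deriv P) (f' := deriv (deriv P))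
      (B := fun _ => R) (B' := fun _ => 0) hPc1.continuousOn
      (fun x _ => (hP2 x).hasDerivWithinAt) hPT.le (fun x => hasDerivAt_const x R) ?_ hx
    intro x hx he
    rw [hPe x ⟨hx.1, hx.2.le⟩, he, hcid R (by rw [abs_of_pos hR0])]
    apply div_neg_of_neg_of_pos _ (hpos' x)
    have h3 := hH.1 x R
    rw [abs_of_pos hR0] at h3
    have h4 : K ^ γ ≤ R ^ γ := Real.rpow_le_rpow hK (by linarith) (by linarith)
    have h5 := mul_le_mul_of_nonneg_left h4 h0.le
    linarith
  have heqn : ∀ x ∈ Icc (-T) T, |deriv P x| ≤ R →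
      (a x + ε ^ 2) * deriv (deriv P) x + H x (deriv P x) = L := by
    intro x hx hb
    rw [hPe x hx, hcid _ hb]
    have := (hpos' x).ne'
    field_simp
    ring
  have hlow : ∀ x ∈ Icc (-T) T, -K ≤ deriv P x := by
    intro x hx
    by_contra! hlt
    have hTx : -T < x := by
      refine lt_of_le_of_ne hx.1 ?_
      rintro rfl
      rw [hPT] at hlt; linarith
    refine no_cross (κ := κ) (L := L) ha hκ hσ h1 hγ hH hv hK hε hLv hP hTx (by rw [hPT]; linarith) hlt
      ?_ ?_
    · intro z hz hb
      exact heqn z ⟨hz.1.le, hz.2.le.trans hx.2⟩ (by linarith)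
    · rw [← hE]; linarith
  refine ⟨P, ε ^ 2, hP, hP0, hε2, hθη, fun x hx => ?_⟩
  have hb : |deriv P x| ≤ R := abs_le.2 ⟨by linarith [hlow x hx], hup x hx⟩
  exact ⟨by rw [← hR]; exact hb, by rw [← hL]; exact heqn x hx hb⟩

theorem ulim {f : ℕ → ℝ} {b : ℝ} (h : ∀ᶠ n in (hyperfilter ℕ : Filter ℕ), |f n| ≤ b) :
    ∃ c, Tendsto f (hyperfilter ℕ : Filter ℕ) (𝓝 c) := by
  obtain ⟨c, -, hc⟩ := (isCompact_Icc (a := -b) (b := b)).ultrafilter_le_nhds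
    ((hyperfilter ℕ).map f) (by
      rw [le_principal_iff]
      show ∀ᶠ n in (hyperfilter ℕ : Filter ℕ), f n ∈ Icc (-b) b
      filter_upwards [h] with n hn using abs_le.1 hn)
  exact ⟨c, hc⟩

theorem limit_sol {a : ℝ → ℝ} {H : ℝ → ℝ → ℝ} {lam R M : ℝ} {P : ℕ → ℝ → ℝ} {θ L T : ℕ → ℝ}
    (hac : Continuous a) (ha0 : ∀ x, 0 ≤ a x) (hH : Continuous (fun z : ℝ × ℝ => H z.1 z.2))
    (hR : 0 ≤ R)
    (hP : ∀ n, ContDiff ℝ 2 (P n)) (hP0 : ∀ n, P n 0 = 0)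
    (hθ : Tendsto θ atTop (𝓝 0)) (hθ0 : ∀ n, 0 < θ n)
    (hL : Tendsto L atTop (𝓝 lam)) (hT : Tendsto T atTop atTop)
    (hM : ∀ n x p, |p| ≤ R → |L n - H x p| ≤ M)
    (hb : ∀ n, ∀ x ∈ Icc (-T n) (T n), |deriv (P n) x| ≤ R)
    (heq : ∀ n, ∀ x ∈ Icc (-T n) (T n),
      (a x + θ n) * deriv (deriv (P n)) x + H x (deriv (P n) x) = L n) :
    ∃ u : ℝ → ℝ, Continuous u ∧ ViscSolOn a H lam univ u ∧
      ContDiffOn ℝ 2 u {x | 0 < a x} := by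
  have hle : (hyperfilter ℕ : Filter ℕ) ≤ atTop := Nat.hyperfilter_le_atTop
  obtain ⟨l, hl⟩ : ∃ l : Filter ℕ, l = (hyperfilter ℕ : Filter ℕ) := ⟨_, rfl⟩
  have hlne : l.NeBot := by rw [hl]; infer_instance
  replace hθ : Tendsto θ l (𝓝 0) := hθ.mono_left (by rw [hl]; exact hle)
  replace hL : Tendsto L l (𝓝 lam) := hL.mono_left (by rw [hl]; exact hle)
  replace hT : Tendsto T l atTop := hT.mono_left (by rw [hl]; exact hle)
  have hder := fun n => deriv2_facts (hP n)
  have hlipn : ∀ n, ∀ x ∈ Icc (-T n) (T n), ∀ y ∈ Icc (-T n) (T n),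
      |P n y - P n x| ≤ R * |y - x| := by
    intro n x hx y hy
    exact Convex.norm_image_sub_le_of_norm_hasDerivWithin_le (f := P n) (f' := deriv (P n))
      (fun z _ => ((hder n).1 z).hasDerivWithinAt) (fun z hz => hb n z hz) (convex_Icc _ _) hx hy
  have hin : ∀ x, ∀ᶠ n in l, x ∈ Icc (-T n) (T n) := fun x => by
    filter_upwards [hT.eventually_ge_atTop |x|] with n hn
    exact abs_le.1 hn
  have hu : ∀ y, ∃ c, Tendsto (fun n => P n y) l (𝓝 c) := fun y => by
    rw [hl]
    apply ulim (b := R * |y|)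
    rw [← hl]
    filter_upwards [hin y, hin 0] with n h1 h2
    simpa [hP0 n] using hlipn n 0 h2 y h1
  have hp : ∀ y, ∃ c, Tendsto (fun n => deriv (P n) y) l (𝓝 c) := fun y => by
    rw [hl]
    apply ulim (b := R)
    rw [← hl]
    filter_upwards [hin y] with n h1
    exact hb n y h1
  choose u hu using hu
  choose p hp using hp
  have hulip : ∀ x y, |u y - u x| ≤ R * |y - x| := fun x y => by
    refine le_of_tendsto ((hu y).sub (hu x)).abs ?_
    filter_upwards [hin x, hin y] with n h1 h2 using hlipn n x h1 y h2
  have huc : Continuous u := by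
    have : LipschitzWith R.toNNReal u := LipschitzWith.of_dist_le_mul fun x y => by
      rw [Real.dist_eq, Real.dist_eq, Real.coe_toNNReal _ hR]; exact hulip y x
    exact this.continuous
  have hsuper : ViscSuperOn a H lam univ u := by
    intro φ hφ x0 _ hm
    exact stab hac hH hP hθ (fun n => (hθ0 n).le) ha0 hL hT hu (fun n x hx => (heq n x hx).le)
      φ hφ x0 hm
  have hsub : ViscSubOn a H lam univ u := by
    intro φ hφ x0 _ hm
    have hm' : IsLocalMin (fun x => -u x - -φ x) x0 := by
      have := hm.neg
      refine this.congr (Eventually.of_forall fun x => ?_)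
      simp only; ring
    have hn1 : ∀ f : ℝ → ℝ, deriv (fun x => - f x) = fun x => - deriv f x := fun f =>
      funext fun x => deriv.fun_neg
    have key := stab (a := a) (H := fun x p => - H x (-p)) (lam := -lam)
      (P := fun n x => - P n x) (u := fun x => - u x) (L := fun n => - L n) hac
      (hH.comp (by fun_prop : Continuous fun z : ℝ × ℝ => (z.1, -z.2))).neg
      (fun n => (hP n).neg) hθ (fun n => (hθ0 n).le) ha0 hL.neg hT (fun y => (hu y).neg)
      (fun n x hx => by
        have := heq n x hx
        simp only [hn1, neg_neg]
        linarith) (fun x => - φ x) hφ.neg x0 hm'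
    simp only [hn1, neg_neg] at key
    linarith
  refine ⟨u, huc, ⟨hsub, hsuper⟩, ?_⟩
  have hAo : IsOpen {x | 0 < a x} := isOpen_lt continuous_const hac
  have claim : ∀ x, 0 < a x → ∀ e > 0, ∃ ρ > 0, ∀ᶠ n in l, ∀ y ∈ Metric.ball x ρ,
      |deriv (P n) y - p x| ≤ e ∧ y ∈ Icc (-T n) (T n) := by
    intro x hx e he
    have hev : ∀ᶠ y in 𝓝 x, a x / 2 < a y :=
      hac.continuousAt.eventually (lt_mem_nhds (by linarith))
    obtain ⟨r, hr, hball⟩ := Metric.mem_nhds_iff.1 hev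
    have hM0 : 0 ≤ M := (abs_nonneg _).trans (hM 0 0 0 (by simpa using hR))
    obtain ⟨D, hD⟩ : ∃ D, D = M / (a x / 2) := ⟨_, rfl⟩
    have hD0 : 0 ≤ D := by rw [hD]; positivity
    refine ⟨min r (e / (2 * (D + 1))), by positivity, ?_⟩
    have hpx : ∀ᶠ n in l, |deriv (P n) x - p x| < e / 2 := by
      have := (hp x).eventually (Metric.ball_mem_nhds (p x) (by positivity : 0 < e / 2))
      filter_upwards [this] with n hn
      rwa [← Real.dist_eq]
    filter_upwards [hpx, hT.eventually_ge_atTop (|x| + r)] with n h1 h2 y hy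
    have hsubs : ∀ z ∈ Metric.ball x (min r (e / (2 * (D + 1)))),
        z ∈ Icc (-T n) (T n) ∧ |deriv (deriv (P n)) z| ≤ D := by
      intro z hz
      have hzr : z ∈ Metric.ball x r := Metric.ball_subset_ball (min_le_left _ _) hz
      have haz : a x / 2 < a z := hball hzr
      rw [Metric.mem_ball, Real.dist_eq] at hzr
      have hzT : z ∈ Icc (-T n) (T n) := by
        apply abs_le.1
        have := abs_sub_abs_le_abs_sub z x
        linarith
      refine ⟨hzT, ?_⟩
      have h3 := heq n z hzT
      have h4 := hM n z _ (hb n z hzT)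
      have h5 : L n - H z (deriv (P n) z) = (a z + θ n) * deriv (deriv (P n)) z := by linarith
      have h6 := hθ0 n
      rw [h5, abs_mul, abs_of_pos (by linarith)] at h4
      rw [hD, le_div_iff₀ (by linarith)]
      have := abs_nonneg (deriv (deriv (P n)) z)
      nlinarith
    refine ⟨?_, (hsubs y hy).1⟩
    have hxb : x ∈ Metric.ball x (min r (e / (2 * (D + 1)))) :=
      Metric.mem_ball_self (by positivity)
    have hmv : |deriv (P n) y - deriv (P n) x| ≤ D * |y - x| :=
      Convex.norm_image_sub_le_of_norm_hasDerivWithin_le (f := deriv (P n))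
        (f' := deriv (deriv (P n))) (fun z _ => ((hder n).2.1 z).hasDerivWithinAt)
        (fun z hz => (hsubs z hz).2) (convex_ball _ _) hxb hy
    have hyx : |y - x| < e / (2 * (D + 1)) := by
      have := Metric.ball_subset_ball (min_le_right _ _) hy
      rwa [Metric.mem_ball, Real.dist_eq] at this
    have h7 : D * |y - x| ≤ e / 2 := by
      rw [lt_div_iff₀ (by positivity)] at hyx
      nlinarith [abs_nonneg (y - x)]
    have h8 := abs_sub_le (deriv (P n) y) (deriv (P n) x) (p x)
    linarith
  have hud : ∀ x, 0 < a x → HasDerivAt u (p x) x := by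
    intro x hx
    refine hasDerivAt_limit (g := fun n => deriv (P n)) hu fun e he => ?_
    obtain ⟨ρ, hρ, hev⟩ := claim x hx e he
    refine ⟨ρ, hρ, ?_⟩
    filter_upwards [hev] with n hn y hy
    exact ⟨(hder n).1 y, (hn y hy).1⟩
  have hpd : ∀ x, 0 < a x → HasDerivAt p ((lam - H x (p x)) / a x) x := by
    intro x hx
    refine hasDerivAt_limit (g := fun n => deriv (deriv (P n))) hp fun e he => ?_
    have hFc : ContinuousAt (fun z : (ℝ × ℝ) × (ℝ × ℝ) =>
        (z.2.2 - H z.1.1 z.1.2) / (a z.1.1 + z.2.1)) ((x, p x), (0, lam)) := by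
      apply ContinuousAt.div
      · have : Continuous (fun z : (ℝ × ℝ) × (ℝ × ℝ) => H z.1.1 z.1.2) := hH.comp continuous_fst
        fun_prop
      · fun_prop
      · simp only [add_zero]; exact hx.ne'
    obtain ⟨d, hd, hF⟩ := Metric.continuousAt_iff.1 hFc e he
    obtain ⟨ρ, hρ, hev⟩ := claim x hx (d / 2) (by positivity)
    refine ⟨min ρ d, by positivity, ?_⟩
    have q1 := hθ.eventually (Metric.ball_mem_nhds 0 hd)
    have q2 := hL.eventually (Metric.ball_mem_nhds lam hd)
    filter_upwards [hev, q1, q2] with n hn h1 h2 y hy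
    refine ⟨(hder n).2.1 y, ?_⟩
    have hy1 := hn y (Metric.ball_subset_ball (min_le_left _ _) hy)
    have hy2 : dist y x < d := Metric.ball_subset_ball (min_le_right _ _) hy
    have h3 := hF (x := ((y, deriv (P n) y), (θ n, L n))) (by
      rw [Prod.dist_eq, Prod.dist_eq, Prod.dist_eq]
      refine max_lt (max_lt hy2 ?_) (max_lt h1 h2)
      simp only
      rw [Real.dist_eq]; linarith [hy1.1])
    simp only [add_zero] at h3
    rw [Real.dist_eq] at h3
    have h4 := heq n y hy1.2
    have h5 : 0 < a y + θ n := by linarith [ha0 y, hθ0 n]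
    have h6 : deriv (deriv (P n)) y = (L n - H y (deriv (P n) y)) / (a y + θ n) := by
      rw [eq_div_iff h5.ne']; linarith
    rw [h6]
    exact h3.le
  have hpc : ContinuousOn p {x | 0 < a x} := fun x hx => (hpd x hx).continuousAt.continuousWithinAt
  have h2 : ContDiffOn ℝ (1 + 1) u {x | 0 < a x} := by
    rw [contDiffOn_succ_iff_deriv_of_isOpen hAo]
    refine ⟨fun x hx => (hud x hx).differentiableAt.differentiableWithinAt, by simp, ?_⟩
    have hcongr : ContDiffOn ℝ (0 + 1) p {x | 0 < a x} := by
      rw [contDiffOn_succ_iff_deriv_of_isOpen hAo]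
      refine ⟨fun x hx => (hpd x hx).differentiableAt.differentiableWithinAt, by simp, ?_⟩
      rw [contDiffOn_zero]
      have hc : ContinuousOn (fun x => (lam - H x (p x)) / a x) {x | 0 < a x} := by
        apply ContinuousOn.div
        · exact continuousOn_const.sub (hH.comp_continuousOn (continuousOn_id.prodMk hpc))
        · exact hac.continuousOn
        · intro x hx; exact ne_of_gt hx
      exact hc.congr fun x hx => (hpd x hx).deriv
    rw [zero_add] at hcongr
    exact hcongr.congr fun x hx => (hud x hx).deriv
  simpa [one_add_one_eq_two] using h2


theorem exists_big {α0 γ : ℝ} (h0 : 0 < α0) (hγ : 2 < γ) (c : ℝ) :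
    ∃ r : ℝ, 0 ≤ r ∧ c < α0 * r ^ γ := by
  have h : Tendsto (fun r : ℝ => α0 * r ^ γ) atTop atTop :=
    (tendsto_rpow_atTop (by linarith)).const_mul_atTop h0
  obtain ⟨r, h1, h2⟩ := ((eventually_ge_atTop (0:ℝ)).and (h.eventually_gt_atTop c)).exists
  exact ⟨r, h1, h2⟩

theorem zero_super {a : ℝ → ℝ} {H : ℝ → ℝ → ℝ} {α0 α1 γ : ℝ}
    (ha : ∀ x, a x ∈ Icc (0:ℝ) 1) (hγ : 2 < γ) (hH : HamClass α0 α1 γ H) :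
    ViscSuperOn a H α1 univ (fun _ => 0) := by
  intro φ hφ x0 _ hm
  have hd := hm.deriv_eq_zero
  have hs := second_deriv_nonneg hm (by
    have := hφ.continuous
    fun_prop)
  have e : deriv (fun x => (0:ℝ) - φ x) = fun x => - deriv φ x := by
    funext x
    simp
  rw [e] at hs hd
  have e2 : deriv (fun x => - deriv φ x) x0 = - deriv (deriv φ) x0 := by simp
  rw [e2] at hs
  have hz : deriv φ x0 = 0 := by simpa using hd
  have := hH.2.1 x0 0
  rw [abs_zero, Real.zero_rpow (by linarith)] at this
  rw [hz]
  nlinarith [mul_nonneg (ha x0).1 hs]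

theorem inf_le_of_super {a : ℝ → ℝ} {H : ℝ → ℝ → ℝ} {α0 α1 γ mu m : ℝ} {u : ℝ → ℝ}
    (ha : ∀ x, a x ∈ Icc (0:ℝ) 1) (h0 : 0 < α0) (hγ : 2 < γ) (hH : HamClass α0 α1 γ H)
    (hm : ∀ x p, m ≤ H x p) (huc : Continuous u) (hu : ViscSuperOn a H mu univ u) : m ≤ mu := by
  obtain ⟨r, hr, hr2⟩ := exists_big h0 hγ (mu + 1 / α0)
  have hl := lip_of_super ha h0 hγ hH.1 huc hu hr hr2
  apply le_of_forall_pos_le_add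
  intro e0 he0
  obtain ⟨e, he⟩ : ∃ e, e = e0 / 2 := ⟨_, rfl⟩
  have hepos : 0 < e := by linarith
  obtain ⟨B, hB⟩ : ∃ B, B = r / e + 1 := ⟨_, rfl⟩
  have hBpos : 0 < B := by rw [hB]; positivity
  have heB : e * B = r + e := by rw [hB]; field_simp
  have hcont : Continuous (fun x => u x - (-e) * x ^ 2) := by fun_prop
  obtain ⟨x0, hx0, hmin⟩ := (isCompact_Icc (a := -B) (b := B)).exists_isMinOn
    ⟨0, by constructor <;> linarith⟩ hcont.continuousOn
  have h00 : u x0 - (-e) * x0 ^ 2 ≤ u 0 - (-e) * 0 ^ 2 := hmin ⟨by linarith, by linarith⟩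
  have hl0 := (abs_le.1 (hl x0 0)).1
  rw [sub_zero] at hl0
  have hne : |x0| < B := by
    rcases lt_or_eq_of_le (abs_le.2 hx0) with h | h
    · exact h
    · exfalso
      have : x0 ^ 2 = B ^ 2 := by rw [← sq_abs, h]
      rw [this] at h00
      rw [h] at hl0
      nlinarith [mul_pos hepos hBpos]
  rw [abs_lt] at hne
  have hloc : IsLocalMin (fun x => u x - (fun x => (-e) * x ^ 2) x) x0 :=
    hmin.isLocalMin (Icc_mem_nhds hne.1 hne.2)
  have ht := hu (fun x => (-e) * x ^ 2) (by fun_prop) x0 (mem_univ _) hloc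
  have e1 : deriv (fun x : ℝ => (-e) * x ^ 2) = fun x => (-e) * (2 * x) := by
    funext x
    have := ((hasDerivAt_pow 2 x).const_mul (-e)).deriv
    simpa using this
  have e2 : deriv (fun x : ℝ => (-e) * (2 * x)) x0 = -e * 2 := by
    have := (((hasDerivAt_id x0).const_mul 2).const_mul (-e)).deriv
    simpa using this
  rw [e1, e2] at ht
  have := hm x0 (-e * (2 * x0))
  have h3 := (ha x0).2
  nlinarith [mul_nonneg hepos.le (sub_nonneg.2 h3)]

/-- Theorem `teo existence solutions`: for every `lam ≥ λ₀` the stationary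
equation `a u'' + H(x,u') = lam` admits a viscosity solution on `ℝ`, which is `K`-Lipschitz
with `K = C(γ) ((κ √(1+α₁+|λ|)/α₀)^{2/(γ-1)} + ((1+λα₀)/α₀²)^{1/γ})`, `C` depending only
on `γ`, and of class `C²` on every open interval contained in `{a > 0}`.
Moreover `λ₀ ≥ inf H ≥ -1/α₀`. -/
theorem statement_5 :
    ∃ C : ℝ → ℝ, (∀ γ : ℝ, 0 < C γ) ∧
      ∀ (a : ℝ → ℝ) (H : ℝ → ℝ → ℝ) (κ α0 α1 γ lam0 lam : ℝ),
        (∀ x, a x ∈ Set.Icc (0:ℝ) 1) →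
        0 < κ → (∀ x y : ℝ, |Real.sqrt (a x) - Real.sqrt (a y)| ≤ κ * |x - y|) →
        0 < α0 → 0 < α1 → 2 < γ →
        HamClass α0 α1 γ H →
        lam0 = CriticalValue a H →
        lam0 ≤ lam →
        (∃ u : ℝ → ℝ,
          Continuous u ∧
          ViscSolOn a H lam Set.univ u ∧
          (∀ x z : ℝ, |u x - u z| ≤
            (C γ * ((κ * Real.sqrt (1 + α1 + |lam|) / α0) ^ ((2:ℝ) / (γ - 1)) +
              ((1 + lam * α0) / α0 ^ 2) ^ ((1:ℝ) / γ))) * |x - z|) ∧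
          (∀ I : Set ℝ, IsOpen I → IsPreconnected I → I ⊆ {x : ℝ | 0 < a x} →
            ContDiffOn ℝ 2 u I)) ∧
        sInf (Set.range fun q : ℝ × ℝ => H q.1 q.2) ≤ lam0 ∧
        -1 / α0 ≤ sInf (Set.range fun q : ℝ × ℝ => H q.1 q.2) := by
  refine ⟨fun _ => 1, fun _ => one_pos, ?_⟩
  intro a H κ α0 α1 γ lam0 lam ha hκ hσ h0 h1 hγ hH hlam0 hlam
  have hbelow : ∀ x p, -1 / α0 ≤ H x p := fun x p => by
    have e1 := hH.1 x p
    have e2 : 0 ≤ α0 * |p| ^ γ := mul_nonneg h0.le (Real.rpow_nonneg (abs_nonneg p) γ)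
    rw [neg_div]
    linarith
  have hbdd : BddBelow (Set.range fun q : ℝ × ℝ => H q.1 q.2) := by
    refine ⟨-1 / α0, ?_⟩
    rintro _ ⟨q, rfl⟩
    exact hbelow q.1 q.2
  have hinf1 : -1 / α0 ≤ sInf (Set.range fun q : ℝ × ℝ => H q.1 q.2) := by
    apply le_csInf (Set.range_nonempty _)
    rintro _ ⟨q, rfl⟩
    exact hbelow q.1 q.2
  have hSne : {lam : ℝ | ∃ u : ℝ → ℝ, Continuous u ∧ ViscSuperOn a H lam Set.univ u}.Nonempty :=
    ⟨α1, fun _ => 0, continuous_const, zero_super ha hγ hH⟩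
  have hinf2 : sInf (Set.range fun q : ℝ × ℝ => H q.1 q.2) ≤ lam0 := by
    rw [hlam0]
    apply le_csInf hSne
    rintro mu ⟨u, huc, hu⟩
    exact inf_le_of_super ha h0 hγ hH (fun x p => csInf_le hbdd ⟨(x, p), rfl⟩) huc hu
  refine ⟨?_, hinf2, hinf1⟩
  have hlamlow : -1 / α0 ≤ lam := hinf1.trans (hinf2.trans hlam)
  obtain ⟨K, hK, hKγ⟩ := exists_big h0 hγ (lam + 2 + 1 / α0)
  have hη : ∀ n : ℕ, 0 < 1 / ((n:ℝ) + 2) := fun n => by positivity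
  have hη1 : ∀ n : ℕ, 1 / ((n:ℝ) + 2) < 1 := fun n => by
    rw [div_lt_one (by positivity)]
    have : (0:ℝ) ≤ n := Nat.cast_nonneg n
    linarith
  have hηt : Tendsto (fun n : ℕ => 1 / ((n:ℝ) + 2)) atTop (𝓝 0) := by
    apply Tendsto.const_div_atTop
    exact tendsto_atTop_add_const_right _ _ tendsto_natCast_atTop_atTop
  have hex : ∀ n : ℕ, ∃ (P : ℝ → ℝ) (θ : ℝ), ContDiff ℝ 2 P ∧ P 0 = 0 ∧ 0 < θ ∧
      θ ≤ 1 / ((n:ℝ) + 2) ∧ ∀ x ∈ Icc (-((n:ℝ) + 1)) ((n:ℝ) + 1), |deriv P x| ≤ 2 * K + 1 ∧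
        (a x + θ) * deriv (deriv P) x + H x (deriv P x) = lam + 2 * (1 / ((n:ℝ) + 2)) := by
    intro n
    have hlt : CriticalValue a H < lam + 1 / ((n:ℝ) + 2) := by
      rw [← hlam0]
      linarith [hη n]
    obtain ⟨mu, ⟨v, hvc, hv⟩, hmu⟩ := exists_lt_of_csInf_lt hSne hlt
    exact approx ha hκ hσ h0 h1 hγ hH hv hvc hK hKγ (hη n) (hη1 n) hmu.le (by positivity)
  choose P θ hP hP0 hθ0 hθ1 hPb using hex
  obtain ⟨u, huc, hu, hu2⟩ := limit_sol (a := a) (H := H) (lam := lam) (R := 2 * K + 1)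
    (M := |lam| + 2 + (1 / α0 + α1 * ((2 * K + 1) ^ γ + 1)))
    (P := P) (θ := θ) (L := fun n : ℕ => lam + 2 * (1 / ((n:ℝ) + 2)))
    (T := fun n : ℕ => (n:ℝ) + 1)
    (a_cont ha hκ hσ) (fun x => (ha x).1) (H_cont hγ hH) (by linarith) hP hP0
    (squeeze_zero (fun n => (hθ0 n).le) hθ1 hηt) hθ0
    (by simpa using (hηt.const_mul 2).const_add lam)
    (tendsto_atTop_add_const_right _ _ tendsto_natCast_atTop_atTop)
    (by
      intro n x p hp
      have e1 := abs_le.1 (H_bd hγ h0 h1 hH x p hp)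
      have e2 := neg_abs_le lam
      have e3 := le_abs_self lam
      have e4 := hη n
      have e5 := hη1 n
      rw [abs_le]
      constructor <;> linarith [e1.1, e1.2])
    (fun n x hx => (hPb n x hx).1) (fun n x hx => (hPb n x hx).2)
  refine ⟨u, huc, hu, ?_, fun I _ _ hI => hu2.mono hI⟩
  intro x z
  have hbase : 0 ≤ (1 + lam * α0) / α0 ^ 2 := by
    apply div_nonneg _ (by positivity)
    rw [div_le_iff₀ h0] at hlamlow
    linarith
  have hK0 : 0 ≤ ((1 + lam * α0) / α0 ^ 2) ^ ((1:ℝ) / γ) := Real.rpow_nonneg hbase _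
  have hK1 : α0 * (((1 + lam * α0) / α0 ^ 2) ^ ((1:ℝ) / γ)) ^ γ = lam + 1 / α0 := by
    rw [← Real.rpow_mul hbase, one_div_mul_cancel (by linarith), Real.rpow_one]
    field_simp
    ring
  have hfirst : 0 ≤ (κ * Real.sqrt (1 + α1 + |lam|) / α0) ^ ((2:ℝ) / (γ - 1)) := by positivity
  generalize ((1 + lam * α0) / α0 ^ 2) ^ ((1:ℝ) / γ) = K0 at *
  have hall : ∀ e : ℝ, 0 < e → |u x - u z| ≤ (K0 + e) * |x - z| := by
    intro e he
    apply lip_of_super ha h0 hγ hH.1 huc hu.2 (by linarith)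
    rw [← hK1]
    exact mul_lt_mul_of_pos_left (Real.rpow_lt_rpow hK0 (by linarith) (by linarith)) h0
  have hfin : |u x - u z| ≤ K0 * |x - z| := by
    have ht : Tendsto (fun e : ℝ => (K0 + e) * |x - z|) (𝓝[>] 0) (𝓝 (K0 * |x - z|)) := by
      have hc : Continuous (fun e : ℝ => (K0 + e) * |x - z|) := by fun_prop
      have := (hc.tendsto 0).mono_left (nhdsWithin_le_nhds (s := Ioi 0))
      simpa using this
    exact ge_of_tendsto ht (by filter_upwards [self_mem_nhdsWithin] with e he using hall e he)
  refine hfin.trans (mul_le_mul_of_nonneg_right ?_ (abs_nonneg _))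
  linarith
end
end

section
/- Let H ∈ 𝓗_sqc(α0,α1,γ,η) with γ > 2, and define λ̂(x) := min_{p∈ℝ} H(x,p) and p̂(x) the unique minimizer of H(x,·). Then the functions λ̂, p̂ : ℝ → ℝ are bounded and κ̂-Lipschitz, for some constant κ̂ = κ̂(α0,α1,γ,η) depending only on α0, α1, γ and η. -/
open Real Set Filter Topology MeasureTheory

noncomputable section

/-- Lemma `appC lemma 1`: for `H ∈ 𝓗_sqc(α₀,α₁,γ,η)` with `γ > 2`, the
functions `λ̂(x) := min_p H(x,p)` and `p̂(x)` (the unique minimizer) are bounded and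
`κ̂`-Lipschitz, with `κ̂ = κ̂(α₀,α₁,γ,η)` depending only on `α₀, α₁, γ, η`. -/
theorem statement_8 :
    ∃ κhat : ℝ → ℝ → ℝ → ℝ → ℝ,
      ∀ (H : ℝ → ℝ → ℝ) (phat : ℝ → ℝ) (α0 α1 γ η : ℝ),
        0 < α0 → 0 < α1 → 2 < γ → 0 < η →
        HamSqc α0 α1 γ η H phat →
        0 < κhat α0 α1 γ η ∧
        (∃ M : ℝ, ∀ x : ℝ, |H x (phat x)| ≤ M ∧ |phat x| ≤ M) ∧
        (∀ x y : ℝ, |H x (phat x) - H y (phat y)| ≤ κhat α0 α1 γ η * |x - y|) ∧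
        (∀ x y : ℝ, |phat x - phat y| ≤ κhat α0 α1 γ η * |x - y|) := by
  refine ⟨fun a0 a1 _ e => a1 * ((a1 + 1 / a0) / a0 + 1) +
    2 * (a1 * ((a1 + 1 / a0) / a0 + 1)) / e, ?_⟩
  intro H phat a0 a1 g e h0 h1 hg he hH
  beta_reduce
  obtain ⟨⟨hlo, hup, -, hx3⟩, hmin, -, hl, hr⟩ := hH
  have hB0 : 0 < (a1 + 1 / a0) / a0 := by positivity
  have hlup : ∀ x, H x (phat x) ≤ a1 := by
    intro x
    have h := (hmin x 0).trans (hup x 0)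
    rw [abs_zero, Real.zero_rpow (by linarith)] at h
    linarith
  have hB : ∀ x, |phat x| ^ g ≤ (a1 + 1 / a0) / a0 := by
    intro x
    rw [le_div_iff₀ h0]
    have := hlo x (phat x)
    have := hlup x
    linarith
  generalize (a1 + 1 / a0) / a0 = B at *
  have hK0 : 0 < a1 * (B + 1) := by positivity
  have hK : ∀ x y z, |H x (phat z) - H y (phat z)| ≤ a1 * (B + 1) * |x - y| := by
    intro x y z
    refine (hx3 x y (phat z)).trans ?_
    have := hB z
    gcongr
  generalize a1 * (B + 1) = K at *
  have hsq : ∀ x q, e * |q - phat x| ≤ H x q - H x (phat x) := by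
    intro x q
    rcases lt_trichotomy q (phat x) with h | h | h
    · exact hl x q _ h le_rfl
    · simp [h]
    · rw [abs_sub_comm]
      exact hr x _ q le_rfl h
  have hlip : ∀ x y, |H x (phat x) - H y (phat y)| ≤ K * |x - y| := by
    intro x y
    have k1 := (abs_le.1 (hK x y y)).2
    have k2 := (abs_le.1 (hK x y x)).1
    have m1 := hmin x (phat y)
    have m2 := hmin y (phat x)
    rw [abs_le]
    constructor <;> linarith
  have hdiv : 0 < 2 * K / e := by positivity
  refine ⟨by positivity, ⟨a1 + 1 / a0 + (1 + B), fun x => ⟨?_, ?_⟩⟩, ?_, ?_⟩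
  · have h2 := hlo x (phat x)
    have h3 := hlup x
    have h4 : 0 ≤ a0 * |phat x| ^ g := by positivity
    have h5 : 0 < 1 / a0 := by positivity
    rw [abs_le]
    constructor <;> linarith
  · have h5 : 0 < 1 / a0 := by positivity
    rcases le_total (|phat x|) 1 with h | h
    · linarith
    · have := Real.self_le_rpow_of_one_le h (by linarith : 1 ≤ g)
      have := hB x
      linarith
  · intro x y
    have := hlip x y
    have : 0 ≤ 2 * K / e * |x - y| := by positivity
    linarith
  · intro x y
    have k1 := (abs_le.1 (hK x y y)).2
    have k2 := (abs_le.1 (hlip x y)).1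
    have s := hsq x (phat y)
    rw [abs_sub_comm] at s
    have h6 : |phat x - phat y| ≤ 2 * K / e * |x - y| := by
      rw [div_mul_eq_mul_div, le_div_iff₀ he]
      linarith
    have : 0 ≤ K * |x - y| := by positivity
    linarith
end
end

section
/- Let a : ℝ → [0,1] satisfy (A1') and have √a κ-Lipschitz, and H ∈ 𝓗_sqc(α0,α1,γ,η) with γ > 2. Let J be an open bounded interval with a > 0 on J, and let x0 ∈ ∂J with a(x0) = 0. Let f ∈ C¹(J) be a bounded solution of the ODE a(x)f' + H(x,f) = λ on J, for some λ ∈ ℝ. Then the limit lim_{x→x0, x∈J} f(x) exists and belongs to {p⁻_λ(x0), p⁺_λ(x0)}. In particular λ ≥ λ̂(x0). -/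
open Real Set Filter Topology MeasureTheory

noncomputable section

theorem aux_cont (a0 a1 g : ℝ) (hg : 2 < g) (H : ℝ → ℝ → ℝ) (hH : HamClass a0 a1 g H) :
    Continuous (fun z : ℝ × ℝ => H z.1 z.2) := by
  obtain ⟨-, -, h2, h3⟩ := hH
  rw [continuous_iff_continuousAt]
  rintro ⟨x, p⟩
  have hc : Continuous (fun z : ℝ × ℝ => a1 * (|z.2| + |p| + 1) ^ (g - 1) * |z.2 - p|
      + a1 * (|p| ^ g + 1) * |z.1 - x|) := by
    have h1 : Continuous (fun z : ℝ × ℝ => (|z.2| + |p| + 1) ^ (g - 1)) :=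
      Continuous.rpow_const (by fun_prop) (fun _ => Or.inr (by linarith))
    fun_prop
  have ht := hc.tendsto (x, p)
  simp only [sub_self, abs_zero, mul_zero, add_zero] at ht
  rw [ContinuousAt, tendsto_iff_dist_tendsto_zero]
  refine squeeze_zero (fun _ => dist_nonneg) (fun z => ?_) ht
  rw [Real.dist_eq]
  calc |H z.1 z.2 - H x p| = |(H z.1 z.2 - H z.1 p) + (H z.1 p - H x p)| := by ring_nf
    _ ≤ _ := (abs_add_le _ _).trans (add_le_add (h2 _ _ _) (h3 _ _ _))

theorem aux_order (l1 l2 x0 : ℝ) (hx0 : x0 = l1 ∨ x0 = l2) (P Q : ℝ → Prop)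
    (hP : ∃ᶠ x in 𝓝[Ioo l1 l2] x0, P x) (hQ : ∃ᶠ x in 𝓝[Ioo l1 l2] x0, Q x)
    (d : ℝ) (hd : 0 < d) :
    ∃ x ∈ Ioo l1 l2, ∃ y ∈ Ioo l1 l2, x < y ∧ P x ∧ Q y ∧
      ∀ z ∈ Icc x y, |z - x0| < d := by
  have hev : ∀ e > 0, ∀ᶠ x in 𝓝[Ioo l1 l2] x0, x ∈ Ioo l1 l2 ∧ |x - x0| < e := by
    intro e he
    refine (eventually_mem_nhdsWithin).and (eventually_nhdsWithin_of_eventually_nhds ?_)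
    exact Metric.ball_mem_nhds x0 he
  rcases hx0 with h | h
  · subst h
    obtain ⟨y, hy, hyJ, hyd⟩ := (hQ.and_eventually (hev d hd)).exists
    obtain ⟨x, hx, hxJ, hxd⟩ := (hP.and_eventually (hev (y - x0) (by linarith [hyJ.1]))).exists
    rw [abs_lt] at hxd hyd
    refine ⟨x, hxJ, y, hyJ, by linarith, hx, hy, fun z hz => ?_⟩
    rw [abs_lt]
    exact ⟨by linarith [hz.1, hxJ.1], by linarith [hz.2]⟩
  · subst h
    obtain ⟨x, hx, hxJ, hxd⟩ := (hP.and_eventually (hev d hd)).exists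
    obtain ⟨y, hy, hyJ, hyd⟩ := (hQ.and_eventually (hev (x0 - x) (by linarith [hxJ.2]))).exists
    rw [abs_lt] at hxd hyd
    refine ⟨x, hxJ, y, hyJ, by linarith, hx, hy, fun z hz => ?_⟩
    rw [abs_lt]
    exact ⟨by linarith [hz.1], by linarith [hz.2, hyJ.2]⟩

theorem aux_cross (f f' : ℝ → ℝ) (x y c : ℝ) (hxy : x < y)
    (hf : ∀ z ∈ Icc x y, HasDerivAt f (f' z) z) (hx : f x < c) (hy : c < f y)
    (h : ∀ z ∈ Icc x y, f z = c → f' z < 0) : False := by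
  have := image_le_of_deriv_right_lt_deriv_boundary (f := f) (f' := f') (a := x) (b := y)
    (B := fun _ => c) (B' := fun _ => 0)
    (fun z hz => (hf z hz).continuousAt.continuousWithinAt)
    (fun z hz => (hf z (Ico_subset_Icc_self hz)).hasDerivWithinAt) hx.le
    (fun z => hasDerivAt_const z c)
    (fun z hz hzc => h z (Ico_subset_Icc_self hz) hzc) (right_mem_Icc.2 hxy.le)
  linarith

/-- Theorem `appC teo boundary regularity`: let `J = (l1,l2)` be an open
bounded interval on which `a > 0`, and `x0 ∈ ∂J` with `a(x0) = 0`.  If `f` is a bounded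
`C¹` solution of `a f' + H(x,f) = lam` on `J`, then `f(x)` has a limit as `x → x0` in `J`,
belonging to `{p⁻_lam(x0), p⁺_lam(x0)}`; in particular `lam ≥ λ̂(x0)`. -/
theorem statement_10
    (a : ℝ → ℝ) (H : ℝ → ℝ → ℝ) (phat : ℝ → ℝ) (pm pp : ℝ → ℝ → ℝ)
    (κ α0 α1 γ η : ℝ)
    (harange : ∀ x, a x ∈ Set.Icc (0:ℝ) 1)
    (hκ : 0 < κ) (hA2 : ∀ x y : ℝ, |Real.sqrt (a x) - Real.sqrt (a y)| ≤ κ * |x - y|)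
    (hA1' : CondA1' a)
    (hα0 : 0 < α0) (hα1 : 0 < α1) (hγ : 2 < γ) (hη : 0 < η)
    (hH : HamSqc α0 α1 γ η H phat)
    -- `p⁻_lam(x) ≤ p⁺_lam(x)` are the endpoints of the sublevel set `{H(x,·) ≤ lam}`
    (hp : ∀ lam x : ℝ, H x (phat x) ≤ lam →
      {p : ℝ | H x p ≤ lam} = Set.Icc (pm lam x) (pp lam x))
    (l1 l2 : ℝ) (hl : l1 < l2)
    (hJpos : ∀ x ∈ Set.Ioo l1 l2, 0 < a x)
    (x0 : ℝ) (hx0 : x0 = l1 ∨ x0 = l2) (hax0 : a x0 = 0)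
    (f : ℝ → ℝ) (lam : ℝ)
    (hf1 : ContDiffOn ℝ 1 f (Set.Ioo l1 l2))
    (hfbdd : ∃ M : ℝ, ∀ x ∈ Set.Ioo l1 l2, |f x| ≤ M)
    (hode : ∀ x ∈ Set.Ioo l1 l2, a x * deriv f x + H x (f x) = lam) :
    H x0 (phat x0) ≤ lam ∧
    ∃ p : ℝ, (p = pm lam x0 ∨ p = pp lam x0) ∧
      Tendsto f (𝓝[Set.Ioo l1 l2] x0) (𝓝 p) := by
  obtain ⟨hHC, hmin, -, hdec, hinc⟩ := hH
  obtain ⟨M, hM⟩ := hfbdd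
  have hHc := aux_cont α0 α1 γ hγ H hHC
  have hder : ∀ x ∈ Ioo l1 l2, HasDerivAt f (deriv f x) x := fun x hx =>
    ((hf1.differentiableOn (by norm_num)).differentiableAt
      (isOpen_Ioo.mem_nhds hx)).hasDerivAt
  have hne : (𝓝[Ioo l1 l2] x0).NeBot := by
    rw [← mem_closure_iff_nhdsWithin_neBot, closure_Ioo hl.ne]
    rcases hx0 with h | h <;> subst h
    · exact left_mem_Icc.2 hl.le
    · exact right_mem_Icc.2 hl.le
  -- levels different from lam are dense
  have hdense : ∀ u v : ℝ, u < v → ∃ c, u < c ∧ c < v ∧ H x0 c ≠ lam := by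
    intro u v huv
    by_contra! hcon
    have e1 := hcon (u + (v - u) / 4) (by linarith) (by linarith)
    have e2 := hcon (u + (v - u) / 2) (by linarith) (by linarith)
    have e3 := hcon (u + 3 * (v - u) / 4) (by linarith) (by linarith)
    rcases le_total (u + (v - u) / 2) (phat x0) with h | h
    · have := hdec x0 (u + (v - u) / 4) _ (by linarith) h
      rw [e1, e2, sub_self] at this
      have h4 : 0 < η * |u + (v - u) / 4 - (u + (v - u) / 2)| :=
        mul_pos hη (abs_pos.2 (by intro h; linarith))
      linarith
    · have := hinc x0 _ (u + 3 * (v - u) / 4) h (by linarith)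
      rw [e2, e3, sub_self] at this
      have h4 : 0 < η * |u + (v - u) / 2 - (u + 3 * (v - u) / 4)| :=
        mul_pos hη (abs_pos.2 (by intro h; linarith))
      linarith
  -- no crossings
  have hcross : ∀ c, H x0 c ≠ lam → (∃ᶠ x in 𝓝[Ioo l1 l2] x0, f x < c) →
      (∃ᶠ x in 𝓝[Ioo l1 l2] x0, c < f x) → False := by
    intro c hc hlt hgt
    have hcc : Continuous (fun x => H x c) := hHc.comp (by fun_prop : Continuous fun x : ℝ => (x, c))
    rcases lt_or_gt_of_ne hc with h | h
    · have := hcc.continuousAt.eventually_lt (continuousAt_const (x := x0)) h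
      obtain ⟨d, hd, hdd⟩ := Metric.eventually_nhds_iff.1 this
      obtain ⟨x, hx, y, hy, hxy, hfx, hfy, hz⟩ := aux_order l1 l2 x0 hx0 _ _ hgt hlt d hd
      have hJ : ∀ z ∈ Icc x y, z ∈ Ioo l1 l2 := fun z hz =>
        ⟨hx.1.trans_le hz.1, hz.2.trans_lt hy.2⟩
      refine aux_cross (fun z => - f z) (fun z => - deriv f z) x y (-c) hxy
        (fun z hz => (hder z (hJ z hz)).neg) (neg_lt_neg hfx) (neg_lt_neg hfy) ?_
      intro z hzz hzc
      have h1 := hdd (y := z) (by rw [Real.dist_eq]; exact hz z hzz)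
      have h2 := hode z (hJ z hzz)
      have h3 := hJpos z (hJ z hzz)
      rw [neg_inj.1 hzc] at h2
      have : 0 < a z * deriv f z := by linarith
      have := pos_of_mul_pos_right this h3.le
      linarith
    · have := (continuousAt_const (x := x0)).eventually_lt hcc.continuousAt h
      obtain ⟨d, hd, hdd⟩ := Metric.eventually_nhds_iff.1 this
      obtain ⟨x, hx, y, hy, hxy, hfx, hfy, hz⟩ := aux_order l1 l2 x0 hx0 _ _ hlt hgt d hd
      have hJ : ∀ z ∈ Icc x y, z ∈ Ioo l1 l2 := fun z hz =>
        ⟨hx.1.trans_le hz.1, hz.2.trans_lt hy.2⟩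
      refine aux_cross f (deriv f) x y c hxy
        (fun z hz => hder z (hJ z hz)) hfx hfy ?_
      intro z hzz hzc
      have h1 := hdd (y := z) (by rw [Real.dist_eq]; exact hz z hzz)
      have h2 := hode z (hJ z hzz)
      have h3 := hJpos z (hJ z hzz)
      rw [hzc] at h2
      by_contra hn
      have := mul_nonneg h3.le (not_lt.1 hn)
      linarith
  have hbd : ∀ᶠ x in 𝓝[Ioo l1 l2] x0, |f x| ≤ M :=
    eventually_nhdsWithin_of_forall hM
  obtain ⟨p, hlim⟩ : ∃ p, Tendsto f (𝓝[Ioo l1 l2] x0) (𝓝 p) := by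
    refine tendsto_of_no_upcrossings (s := univ) dense_univ ?_ ?_ ?_
    · rintro u - v - huv ⟨h1, h2⟩
      obtain ⟨c, hc1, hc2, hc⟩ := hdense u v huv
      exact hcross c hc (h1.mono fun x hx => hx.trans hc1) (h2.mono fun x hx => hc2.trans hx)
    · exact ⟨M, by simpa using hbd.mono fun x hx => (abs_le.1 hx).2⟩
    · exact ⟨-M, by simpa using hbd.mono fun x hx => (abs_le.1 hx).1⟩
  have hHp : H x0 p = lam := by
    by_contra hne'
    have hT : Tendsto (fun x => |lam - H x (f x)|) (𝓝[Ioo l1 l2] x0) (𝓝 |lam - H x0 p|) := by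
      have h1 : Tendsto (fun x => (x, f x)) (𝓝[Ioo l1 l2] x0) (𝓝 (x0, p)) :=
        (tendsto_nhdsWithin_of_tendsto_nhds tendsto_id).prodMk_nhds hlim
      exact (tendsto_const_nhds.sub ((hHc.tendsto (x0, p)).comp h1)).abs
    have hpos : 0 < |lam - H x0 p| := abs_pos.2 (sub_ne_zero.2 (Ne.symm hne'))
    set c := |lam - H x0 p| / 2 with hcdef
    have hc0 : 0 < c := by positivity
    have hev := hT.eventually_const_lt (show c < |lam - H x0 p| by linarith)
    rw [eventually_nhdsWithin_iff] at hev
    obtain ⟨d, hd, hdd⟩ := Metric.eventually_nhds_iff.1 hev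
    have hM0 : 0 ≤ M := by
      obtain ⟨x, hx⟩ := hbd.exists
      exact (abs_nonneg _).trans hx
    -- key estimate
    have key : ∀ h : ℝ, 0 < h → ∀ x ∈ Ioo l1 l2, ∀ y ∈ Ioo l1 l2, y - x = h →
        (∀ z ∈ Ioo x y, |z - x0| ≤ 2 * h) → 2 * h < d → c ≤ 8 * M * κ ^ 2 * h := by
      intro h hh x hx y hy hyx hz hhd
      have hJ : ∀ z ∈ Icc x y, z ∈ Ioo l1 l2 := fun z hz =>
        ⟨hx.1.trans_le hz.1, hz.2.trans_lt hy.2⟩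
      obtain ⟨z, hzI, hzz⟩ := exists_hasDerivAt_eq_slope f (deriv f) (by linarith : x < y)
        (fun z hz => (hder z (hJ z hz)).continuousAt.continuousWithinAt)
        (fun z hz => hder z (hJ z (Ioo_subset_Icc_self hz)))
      have hzJ := hJ z (Ioo_subset_Icc_self hzI)
      have hzd := hz z hzI
      have h1 : c < |lam - H z (f z)| := hdd (by rw [Real.dist_eq]; linarith) hzJ
      have h2 := hode z hzJ
      have h3 : lam - H z (f z) = a z * deriv f z := by linarith
      have h4 := hA2 z x0
      rw [hax0, Real.sqrt_zero, sub_zero, abs_of_nonneg (Real.sqrt_nonneg _)] at h4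
      have h5 : √(a z) ≤ κ * (2 * h) := h4.trans (mul_le_mul_of_nonneg_left hzd hκ.le)
      have h6 : a z ≤ (κ * (2 * h)) ^ 2 := (Real.sqrt_le_left (by positivity)).1 h5
      have h7 : |deriv f z| * h ≤ 2 * M := by
        rw [hyx] at hzz
        have : deriv f z * h = f y - f x := by rw [hzz]; field_simp
        rw [← abs_of_pos hh, ← abs_mul, this]
        have := abs_sub (f y) (f x)
        linarith [hM x hx, hM y hy]
      rw [h3, abs_mul, abs_of_pos (hJpos z hzJ)] at h1
      calc c ≤ a z * |deriv f z| := h1.le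
        _ ≤ (κ * (2 * h)) ^ 2 * |deriv f z| := by gcongr
        _ = 4 * κ ^ 2 * h * (|deriv f z| * h) := by ring
        _ ≤ 4 * κ ^ 2 * h * (2 * M) := by gcongr
        _ = _ := by ring
    have hex : ∀ h : ℝ, 0 < h → 2 * h < d → 2 * h < l2 - l1 → c ≤ 8 * M * κ ^ 2 * h := by
      intro h hh h1 h2
      rcases hx0 with e | e
      · refine key h hh (x0 + h) ⟨by linarith, by linarith⟩ (x0 + 2 * h)
          ⟨by linarith, by linarith⟩ (by ring) (fun z hz => ?_) h1
        rw [abs_le]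
        exact ⟨by linarith [hz.1], by linarith [hz.2]⟩
      · refine key h hh (x0 - 2 * h) ⟨by linarith, by linarith⟩ (x0 - h)
          ⟨by linarith, by linarith⟩ (by ring) (fun z hz => ?_) h1
        rw [abs_le]
        exact ⟨by linarith [hz.1], by linarith [hz.2]⟩
    have hK : 0 < 8 * M * κ ^ 2 + 1 := by positivity
    obtain ⟨h, hh0, hh⟩ := exists_between
      (show (0:ℝ) < min (min (d / 2) ((l2 - l1) / 2)) (c / (8 * M * κ ^ 2 + 1)) from
        lt_min (lt_min (by linarith) (by linarith)) (by positivity))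
    rw [lt_min_iff, lt_min_iff] at hh
    have h1 := hex h hh0 (by linarith [hh.1.1]) (by linarith [hh.1.2])
    have h2 := (lt_div_iff₀ hK).1 hh.2
    nlinarith
  have hle : H x0 (phat x0) ≤ lam := hHp ▸ hmin x0 p
  refine ⟨hle, p, ?_, hlim⟩
  have hset := hp lam x0 hle
  have hpI : p ∈ Icc (pm lam x0) (pp lam x0) := by
    rw [← hset]; exact hHp.le
  have hm : H x0 (pm lam x0) ≤ lam := by
    have : pm lam x0 ∈ {p : ℝ | H x0 p ≤ lam} := by
      rw [hset]; exact left_mem_Icc.2 (hpI.1.trans hpI.2)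
    exact this
  have hpp : H x0 (pp lam x0) ≤ lam := by
    have : pp lam x0 ∈ {p : ℝ | H x0 p ≤ lam} := by
      rw [hset]; exact right_mem_Icc.2 (hpI.1.trans hpI.2)
    exact this
  rcases le_total p (phat x0) with h | h
  · left
    by_contra hne'
    have hlt : pm lam x0 < p := lt_of_le_of_ne hpI.1 (Ne.symm hne')
    have h1 := hdec x0 _ _ hlt h
    have h2 : 0 < η * |pm lam x0 - p| := mul_pos hη (abs_pos.2 (by intro h; linarith))
    linarith
  · right
    by_contra hne'
    have hlt : p < pp lam x0 := lt_of_le_of_ne hpI.2 hne'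
    have h1 := hinc x0 _ _ h hlt
    have h2 : 0 < η * |p - pp lam x0| := mul_pos hη (abs_pos.2 (by intro h; linarith))
    linarith
end
end

section
/- Let a : ℝ → [0,1] satisfy (A1') and have √a κ-Lipschitz, and H ∈ 𝓗_sqc(α0,α1,γ,η) with γ > 2. Let λ0 := inf{μ : a u'' + H(x,u') = μ admits a continuous viscosity supersolution on ℝ}, and λ̂(x) := min_{p∈ℝ} H(x,p). Then λ0 ≥ sup_{x ∈ {a=0}} λ̂(x). -/
open Real Set Filter Topology MeasureTheory

noncomputable section

theorem aux_nonempty {φ : ℝ → ℝ} {x0 : ℝ} (hφ : ContDiff ℝ 2 φ)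
    (h : IsLocalMax φ x0) : deriv (deriv φ) x0 ≤ 0 := by
  by_contra hc
  push Not at hc
  have h1 : deriv φ x0 = 0 := h.deriv_eq_zero
  have h2 : IsLocalMin φ x0 :=
    isLocalMin_of_deriv_deriv_pos hc h1 hφ.continuous.continuousAt
  have h3 : φ =ᶠ[𝓝 x0] fun _ => φ x0 := by
    filter_upwards [h, h2] with x hx hx'
    exact le_antisymm hx hx'
  have h4 : deriv (deriv φ) x0 = 0 := by
    rw [h3.deriv.deriv_eq]; simp
  linarith

theorem aux_main (a : ℝ → ℝ) (H : ℝ → ℝ → ℝ) (P κ α0 α1 γ lam x0 : ℝ) (u : ℝ → ℝ)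
    (ha : ∀ x, 0 ≤ a x)
    (hA2 : ∀ x y : ℝ, |Real.sqrt (a x) - Real.sqrt (a y)| ≤ κ * |x - y|)
    (hα0 : 0 < α0) (hα1 : 0 < α1)
    (hH : HamClass α0 α1 γ H) (hP : ∀ p, P ≤ H x0 p) (hx0 : a x0 = 0)
    (hu : Continuous u) (hs : ViscSuperOn a H lam Set.univ u)
    (ε : ℝ) (hε : 0 < ε) (hε1 : ε ≤ 1) :
    P ≤ lam + (2 * κ ^ 2 + α1 * (|(lam + 2 * κ ^ 2 + 1 / α0) / α0| + 1)) * ε := by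
  obtain ⟨δ0, hδ0, hcont⟩ := Metric.continuous_iff.1 hu x0 ε hε
  obtain ⟨δ, hδ, hδε, hδ1⟩ : ∃ δ : ℝ, 0 < δ ∧ δ ≤ ε ∧ δ < δ0 :=
    ⟨min ε (δ0 / 2), by positivity, min_le_left _ _,
      lt_of_le_of_lt (min_le_right _ _) (by linarith)⟩
  set c := ε / δ ^ 2 with hc
  have hcpos : 0 < c := by positivity
  have hcδ : c * δ ^ 2 = ε := by rw [hc]; field_simp
  set φ : ℝ → ℝ := fun x => -c * (x - x0) ^ 2 with hφ
  have hφc : ContDiff ℝ 2 φ := by rw [hφ]; fun_prop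
  have hd1 : deriv φ = fun x => -c * (2 * (x - x0)) := by
    funext x
    have : HasDerivAt φ (-c * (2 * (x - x0))) x := by
      have := (((hasDerivAt_id x).sub_const x0).pow 2).const_mul (-c)
      refine this.congr_deriv ?_
      simp
    exact this.deriv
  have hd2 : ∀ x, deriv (deriv φ) x = -c * 2 := by
    intro x
    rw [hd1]
    have : HasDerivAt (fun x => -c * (2 * (x - x0))) (-c * 2) x := by
      have := (((hasDerivAt_id x).sub_const x0).const_mul 2).const_mul (-c)
      refine this.congr_deriv ?_
      simp
    exact this.deriv
  obtain ⟨y, hy, hmin⟩ := (isCompact_closedBall x0 δ).exists_isMinOn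
    ⟨x0, Metric.mem_closedBall_self hδ.le⟩ ((hu.sub hφc.continuous).continuousOn)
  have hyd : |y - x0| ≤ δ := by simpa [Real.dist_eq] using hy
  have h0 : u y + c * (y - x0) ^ 2 ≤ u x0 := by
    have := hmin (Metric.mem_closedBall_self hδ.le)
    simp [hφ] at this
    linarith
  have h1 : |u y - u x0| < ε := by
    have := hcont y (by rw [Real.dist_eq]; linarith)
    rwa [Real.dist_eq] at this
  have h2 : c * (y - x0) ^ 2 < ε := by linarith [(abs_lt.1 h1).1]
  have h3 : |y - x0| < δ := by
    rw [← hcδ] at h2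
    exact abs_lt_of_sq_lt_sq (lt_of_mul_lt_mul_left h2 hcpos.le) hδ.le
  have hloc : IsLocalMin (fun x => u x - φ x) y :=
    hmin.isLocalMin (mem_of_superset (Metric.isOpen_ball.mem_nhds
      (by simpa [Real.dist_eq] using h3)) Metric.ball_subset_closedBall)
  have key := hs φ hφc y (Set.mem_univ _) hloc
  rw [hd2] at key
  generalize deriv φ y = p at key
  have hay : a y ≤ κ ^ 2 * (y - x0) ^ 2 := by
    have := hA2 y x0
    rw [hx0, Real.sqrt_zero, sub_zero, abs_of_nonneg (Real.sqrt_nonneg _)] at this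
    have h5 := pow_le_pow_left₀ (Real.sqrt_nonneg _) this 2
    rwa [Real.sq_sqrt (ha y), mul_pow, sq_abs] at h5
  have h6 : a y * c ≤ κ ^ 2 * ε := by
    calc a y * c ≤ κ ^ 2 * (y - x0) ^ 2 * c := by gcongr
      _ = κ ^ 2 * (c * (y - x0) ^ 2) := by ring
      _ ≤ κ ^ 2 * ε := by gcongr
  have h7 : H y p ≤ lam + 2 * κ ^ 2 * ε := by linarith
  obtain ⟨H1, -, -, H3⟩ := hH
  have h8 : |p| ^ γ ≤ |(lam + 2 * κ ^ 2 + 1 / α0) / α0| := by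
    refine le_trans ?_ (le_abs_self _)
    rw [le_div_iff₀ hα0]
    have := H1 y p
    have : κ ^ 2 * ε ≤ κ ^ 2 * 1 := by gcongr
    linarith
  have h9 : α1 * (|p| ^ γ + 1) * |x0 - y|
      ≤ α1 * (|(lam + 2 * κ ^ 2 + 1 / α0) / α0| + 1) * ε := by
    have : |x0 - y| ≤ ε := by rw [abs_sub_comm]; linarith
    gcongr
  have h10 := (le_abs_self _).trans (H3 x0 y p)
  have := hP p
  linarith

/-- Proposition `appC prop lambda 0`: `λ₀ ≥ sup_{x ∈ {a=0}} λ̂(x)`,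
i.e. the critical value dominates `λ̂(x) = H(x, p̂(x))` at every zero of the diffusion
coefficient. -/
theorem statement_12
    (a : ℝ → ℝ) (H : ℝ → ℝ → ℝ) (phat : ℝ → ℝ)
    (κ α0 α1 γ η : ℝ)
    (harange : ∀ x, a x ∈ Set.Icc (0:ℝ) 1)
    (hκ : 0 < κ) (hA2 : ∀ x y : ℝ, |Real.sqrt (a x) - Real.sqrt (a y)| ≤ κ * |x - y|)
    (hA1' : CondA1' a)
    (hα0 : 0 < α0) (hα1 : 0 < α1) (hγ : 2 < γ) (hη : 0 < η)
    (hH : HamSqc α0 α1 γ η H phat)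
    (lam0 : ℝ) (hlam0 : lam0 = CriticalValue a H) :
    ∀ x : ℝ, a x = 0 → H x (phat x) ≤ lam0 := by
  intro x hx
  subst hlam0
  refine le_csInf ⟨α1 , fun _ => 0, continuous_const, ?_⟩ ?_
  · intro φ hφ x0 _ hmin
    have hmax : IsLocalMax φ x0 := by
      filter_upwards [hmin] with y hy
      linarith
    have h1 := aux_nonempty hφ hmax
    rw [hmax.deriv_eq_zero]
    have h2 := hH.1.2.1 x0 0
    rw [abs_zero, Real.zero_rpow (by linarith)] at h2
    have := mul_nonpos_of_nonneg_of_nonpos (harange x0).1 h1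
    linarith
  · rintro lam ⟨u, hu, hs⟩
    have key := aux_main a H (H x (phat x)) κ α0 α1 γ lam x u (fun x => (harange x).1) hA2
      hα0 hα1 hH.1 (hH.2.1 x) hx hu hs
    set C := 2 * κ ^ 2 + α1 * (|(lam + 2 * κ ^ 2 + 1 / α0) / α0| + 1)
    have hC : 0 < C := by positivity
    refine le_of_forall_pos_le_add fun d hd => ?_
    refine (key (min 1 (d / C)) (by positivity) (min_le_left _ _)).trans ?_
    have : C * min 1 (d / C) ≤ C * (d / C) := by gcongr; exact min_le_right _ _
    rw [mul_div_cancel₀ _ hC.ne'] at this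
    linarith
end
end

section
/- Let a : ℝ → [0,1] satisfy (A1') and have √a κ-Lipschitz, and H ∈ 𝓗_sqc(α0,α1,γ,η) with γ > 2. Let λ ≥ sup_{x∈{a=0}} λ̂(x). Then the functions p⁻_λ, p⁺_λ : {a=0} → ℝ are well defined, bounded and Lipschitz continuous: there exist a constant K̃_λ = K̃(α0,γ,λ) depending only on α0 > 0, γ > 2 and λ, and a constant κ̃_λ = κ̃(K̃_λ,α1,γ,η), also depending on α1 > 0 and η > 0, such that |p^±_λ(x)| ≤ K̃_λ and |p^±_λ(x) − p^±_λ(y)| ≤ κ̃_λ|x−y| for all x, y ∈ {a=0}. -/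
open Real Set Filter Topology MeasureTheory

noncomputable section

theorem aux_cont_s13 {α0 α1 γ : ℝ} {H : ℝ → ℝ → ℝ} (hg : 2 < γ) (h : HamClass α0 α1 γ H) (x : ℝ) :
    Continuous (H x) := by
  rw [continuous_iff_continuousAt]
  intro p
  have h2 := h.2.2.1
  have hc : Continuous (fun q : ℝ => α1 * (|q| + |p| + 1) ^ (γ - 1) * |q - p|) := by
    have : Continuous (fun q : ℝ => (|q| + |p| + 1) ^ (γ - 1)) :=
      Continuous.rpow_const (by fun_prop) (fun q => Or.inr (by linarith))
    fun_prop
  have ht := hc.tendsto p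
  simp only [sub_self, abs_zero, mul_zero] at ht
  rw [ContinuousAt, tendsto_iff_dist_tendsto_zero]
  exact squeeze_zero (fun _ => dist_nonneg) (fun q => by rw [Real.dist_eq]; exact h2 x q p) ht

theorem aux_ends {α0 α1 γ η lam : ℝ} {H : ℝ → ℝ → ℝ} {phat : ℝ → ℝ} (hg : 2 < γ) (he : 0 < η)
    (h : HamSqc α0 α1 γ η H phat) (x : ℝ) (hx : H x (phat x) ≤ lam) :
    ∃ m p : ℝ, m ≤ phat x ∧ phat x ≤ p ∧ H x m = lam ∧ H x p = lam := by
  have hc := aux_cont_s13 hg h.1 x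
  obtain ⟨-, -, -, hl, hr⟩ := h
  set R := (lam - H x (phat x)) / η + 1 with hR
  have hR1 : 1 ≤ R := by
    have : 0 ≤ (lam - H x (phat x)) / η := div_nonneg (by linarith) he.le
    linarith
  have hRe : η * R = lam - H x (phat x) + η := by rw [hR]; field_simp
  have h1 := hr x (phat x) (phat x + R) le_rfl (by linarith)
  have h2 := hl x (phat x - R) (phat x) (by linarith) le_rfl
  rw [show phat x - (phat x + R) = -R by ring, abs_neg, abs_of_nonneg (by linarith)] at h1
  rw [show phat x - R - phat x = -R by ring, abs_neg, abs_of_nonneg (by linarith)] at h2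
  obtain ⟨p, hp, hp'⟩ := intermediate_value_Icc (show phat x ≤ phat x + R by linarith)
    hc.continuousOn (show lam ∈ Set.Icc _ _ from ⟨hx, by linarith⟩)
  obtain ⟨m, hm, hm'⟩ := intermediate_value_Icc' (show phat x - R ≤ phat x by linarith)
    hc.continuousOn (show lam ∈ Set.Icc _ _ from ⟨hx, by linarith⟩)
  exact ⟨m, p, hm.2, hp.1, hm', hp'⟩

theorem aux_bound {α0 γ lam p : ℝ} (h0 : 0 < α0) (hg : 2 < γ)
    (h : α0 * |p| ^ γ - 1 / α0 ≤ lam) : |p| ≤ max 1 ((lam + 1 / α0) / α0) := by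
  rcases le_total |p| 1 with h1 | h1
  · exact le_max_of_le_left h1
  · apply le_max_of_le_right
    have h2 : |p| ≤ |p| ^ γ := by
      simpa using Real.rpow_le_rpow_of_exponent_le h1 (show (1:ℝ) ≤ γ by linarith)
    rw [le_div_iff₀ h0]
    nlinarith

/-- Proposition `appC prop p lambda`: for `lam ≥ sup_{x∈{a=0}} λ̂(x)` the
endpoint functions `p⁻_lam, p⁺_lam : {a=0} → ℝ` of the sublevel sets `{H(x,·) ≤ lam}` are
well defined, bounded by `K̃_lam = K̃(α₀,γ,lam)` and Lipschitz with constant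
`κ̃_lam = κ̃(K̃_lam, α₁, γ, η)`. -/
theorem statement_13 :
    ∃ Kt : ℝ → ℝ → ℝ → ℝ, ∃ κt : ℝ → ℝ → ℝ → ℝ → ℝ,
      ∀ (a : ℝ → ℝ) (H : ℝ → ℝ → ℝ) (phat : ℝ → ℝ) (κ α0 α1 γ η lam : ℝ),
        (∀ x, a x ∈ Set.Icc (0:ℝ) 1) →
        0 < κ → (∀ x y : ℝ, |Real.sqrt (a x) - Real.sqrt (a y)| ≤ κ * |x - y|) →
        CondA1' a →
        0 < α0 → 0 < α1 → 2 < γ → 0 < η →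
        HamSqc α0 α1 γ η H phat →
        (∀ x : ℝ, a x = 0 → H x (phat x) ≤ lam) →
        ∃ pm pp : ℝ → ℝ,
          (∀ x : ℝ, a x = 0 → {p : ℝ | H x p ≤ lam} = Set.Icc (pm x) (pp x)) ∧
          (∀ x : ℝ, a x = 0 → |pm x| ≤ Kt α0 γ lam ∧ |pp x| ≤ Kt α0 γ lam) ∧
          (∀ x y : ℝ, a x = 0 → a y = 0 →
            |pm x - pm y| ≤ κt (Kt α0 γ lam) α1 γ η * |x - y| ∧
            |pp x - pp y| ≤ κt (Kt α0 γ lam) α1 γ η * |x - y|) := by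
  refine ⟨fun α0 _ lam => max 1 ((lam + 1 / α0) / α0),
    fun K α1 γ η => α1 * (K ^ γ + 1) / η, ?_⟩
  intro a H phat κ α0 α1 γ η lam _ _ _ _ h0 h1 hg he hH hlam
  have hex : ∀ x, ∃ m p : ℝ, a x = 0 →
      (m ≤ phat x ∧ phat x ≤ p ∧ H x m = lam ∧ H x p = lam) := by
    intro x
    by_cases hx : a x = 0
    · obtain ⟨m, p, hmp⟩ := aux_ends hg he hH x (hlam x hx)
      exact ⟨m, p, fun _ => hmp⟩
    · exact ⟨0, 0, fun h => absurd h hx⟩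
  choose pm pp hp using hex
  obtain ⟨⟨hb, -, -, h3⟩, -, -, hl, hr⟩ := hH
  have bm : ∀ x, a x = 0 → |pm x| ≤ max 1 ((lam + 1 / α0) / α0) := fun x hx =>
    aux_bound h0 hg ((hb x (pm x)).trans (hp x hx).2.2.1.le)
  have bp : ∀ x, a x = 0 → |pp x| ≤ max 1 ((lam + 1 / α0) / α0) := fun x hx =>
    aux_bound h0 hg ((hb x (pp x)).trans (hp x hx).2.2.2.le)
  refine ⟨pm, pp, ?_, fun x hx => ⟨bm x hx, bp x hx⟩, ?_⟩
  · intro x hx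
    obtain ⟨i1, i2, i3, i4⟩ := hp x hx
    ext p
    simp only [Set.mem_setOf_eq, Set.mem_Icc]
    constructor
    · intro h
      constructor
      · by_contra! hc
        have := hl x p (pm x) hc i1
        have := mul_pos he (abs_pos.2 (sub_ne_zero.2 hc.ne))
        linarith
      · by_contra! hc
        have := hr x (pp x) p i2 hc
        have := mul_pos he (abs_pos.2 (sub_ne_zero.2 hc.ne))
        linarith
    · rintro ⟨j1, j2⟩
      rcases le_total p (phat x) with hc | hc
      · rcases j1.eq_or_lt with rfl | j1
        · exact i3.le
        · have := hl x (pm x) p j1 hc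
          have := mul_nonneg he.le (abs_nonneg (pm x - p))
          linarith
      · rcases j2.eq_or_lt with rfl | j2
        · exact i4.le
        · have := hr x p (pp x) hc j2
          have := mul_nonneg he.le (abs_nonneg (p - pp x))
          linarith
  · dsimp only
    set K := max 1 ((lam + 1 / α0) / α0) with hK
    have h3' : ∀ x y p, |p| ≤ K → H x p - H y p ≤ α1 * (K ^ γ + 1) * |x - y| := by
      intro x y p hpK
      refine (le_abs_self _).trans ((h3 x y p).trans ?_)
      have : |p| ^ γ ≤ K ^ γ := Real.rpow_le_rpow (abs_nonneg _) hpK (by linarith)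
      gcongr
    have fin : ∀ d t : ℝ, η * d ≤ α1 * (K ^ γ + 1) * t → d ≤ α1 * (K ^ γ + 1) / η * t := by
      intro d t h
      rw [div_mul_eq_mul_div, le_div_iff₀ he]
      linarith
    have Lp : ∀ x y, a x = 0 → a y = 0 → pp x < pp y →
        η * |pp x - pp y| ≤ α1 * (K ^ γ + 1) * |x - y| := by
      intro x y hx hy hlt
      have e1 := hr x (pp x) (pp y) (hp x hx).2.1 hlt
      have e2 := h3' x y (pp y) (bp y hy)
      have e3 := (hp x hx).2.2.2
      have e4 := (hp y hy).2.2.2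
      linarith
    have Lm : ∀ x y, a x = 0 → a y = 0 → pm x < pm y →
        η * |pm x - pm y| ≤ α1 * (K ^ γ + 1) * |x - y| := by
      intro x y hx hy hlt
      have e1 := hl y (pm x) (pm y) hlt (hp y hy).1
      have e2 := h3' y x (pm x) (bm x hx)
      have e3 := (hp x hx).2.2.1
      have e4 := (hp y hy).2.2.1
      rw [abs_sub_comm x y]
      linarith
    have hKn : 0 ≤ K ^ γ := Real.rpow_nonneg (zero_le_one.trans (le_max_left _ _)) _
    have hz : ∀ t : ℝ, 0 ≤ α1 * (K ^ γ + 1) * |t| := fun t => by positivity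
    intro x y hx hy
    constructor
    · apply fin
      rcases lt_trichotomy (pm x) (pm y) with h | h | h
      · exact Lm x y hx hy h
      · rw [h, sub_self, abs_zero, mul_zero]; exact hz _
      · rw [abs_sub_comm, abs_sub_comm x y]; exact Lm y x hy hx h
    · apply fin
      rcases lt_trichotomy (pp x) (pp y) with h | h | h
      · exact Lp x y hx hy h
      · rw [h, sub_self, abs_zero, mul_zero]; exact hz _
      · rw [abs_sub_comm, abs_sub_comm x y]; exact Lp y x hy hx h
end
end
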